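/- There is a constant q₀ depending only on n such that the following holds whenever q ≥ q₀: if 𝓕 is a ratio-sharp EKR-set of chambers, then 𝓕 contains no light chamber; that is, every chamber C ∈ 𝓕 has at least one index s ∈ [n] for which the s-space C_s is heavy with respect to 𝓕. -/

import Mathlib

open scoped Classical

open Module

section Defs

variable {F V : Type} [Field F] [AddCommGroup V] [Module F V]

/-- The orthogonal complement of a subspace with respect to a bilinear form. -/
def bperp (B : V →ₗ[F] V →ₗ[F] F) (W : Submodule F V) : Submodule F V :=
  ⨅ w ∈ W, LinearMap.ker (B w)

/-- A subspace is totally isotropic for `B`. -/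
def IsTotIso (B : V →ₗ[F] V →ₗ[F] F) (W : Submodule F V) : Prop :=
  ∀ u ∈ W, ∀ w ∈ W, B u w = 0

/-- `B` is an alternating form. -/
def IsAltForm (B : V →ₗ[F] V →ₗ[F] F) : Prop := ∀ v, B v v = 0

/-- `B` is nondegenerate. -/
def NondegForm (B : V →ₗ[F] V →ₗ[F] F) : Prop := ∀ v, (∀ w, B v w = 0) → v = 0

/-- A flag of type `J` of totally isotropic subspaces: entries outside `J` are `⊥`. -/
structure SFlag (B : V →ₗ[F] V →ₗ[F] F) (J : Finset ℕ) where
  space : ℕ → Submodule F V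
  isotropic : ∀ i ∈ J, IsTotIso B (space i)
  finrank_eq : ∀ i ∈ J, Module.finrank F (space i) = i
  mono : ∀ i ∈ J, ∀ j ∈ J, i ≤ j → space i ≤ space j
  eq_bot : ∀ i, i ∉ J → space i = ⊥

/-- Two flags of type `J` are opposite. -/
def FlagOpp {B : V →ₗ[F] V →ₗ[F] F} {J : Finset ℕ} (C C' : SFlag B J) : Prop :=
  ∀ i ∈ J, bperp B (C.space i) ⊓ C'.space i = ⊥

/-- An EKR-set of flags of type `J`: no two members are opposite. -/
def IsEKRFlags {B : V →ₗ[F] V →ₗ[F] F} {J : Finset ℕ} (𝓕 : Set (SFlag B J)) : Prop :=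
  ∀ C ∈ 𝓕, ∀ C' ∈ 𝓕, ¬ FlagOpp C C'

/-- Two subspaces are opposite. -/
def SpaceOpp (B : V →ₗ[F] V →ₗ[F] F) (S T : Submodule F V) : Prop :=
  bperp B S ⊓ T = ⊥

/-- An EKR-set of totally isotropic `s`-spaces: no two members are opposite. -/
def IsEKRSpaces (B : V →ₗ[F] V →ₗ[F] F) (s : ℕ) (𝓕 : Set (Submodule F V)) : Prop :=
  (∀ S ∈ 𝓕, IsTotIso B S ∧ Module.finrank F S = s) ∧
    ∀ S ∈ 𝓕, ∀ T ∈ 𝓕, ¬ SpaceOpp B S T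

/-- An `s`-space `S` is heavy with respect to a set `𝓕` of flags: every flag whose
`s`-th entry equals `S` belongs to `𝓕`. -/
def Heavy {B : V →ₗ[F] V →ₗ[F] F} {J : Finset ℕ} (𝓕 : Set (SFlag B J)) (s : ℕ)
    (S : Submodule F V) : Prop :=
  ∀ C : SFlag B J, C.space s = S → C ∈ 𝓕

end Defs

/-- `z_k = ∏_{i=1}^k (q^i-1)/(q-1)`. -/
noncomputable def zpol (q k : ℕ) : ℝ :=
  ∏ i ∈ Finset.Icc 1 k, ((q : ℝ) ^ i - 1) / ((q : ℝ) - 1)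

/-- The Gaussian binomial coefficient `[m choose k]_q` as a real number. -/
noncomputable def gaussq (q m k : ℕ) : ℝ :=
  ∏ i ∈ Finset.Icc 1 k, ((q : ℝ) ^ (m - k + i) - 1) / ((q : ℝ) ^ i - 1)

/-- `Φ_m^s` in `PS(n,1,q)`: the number of totally isotropic `s`-spaces containing a
fixed totally isotropic `m`-space. -/
noncomputable def PhiP (q n m s : ℕ) : ℝ :=
  gaussq q (n - m) (s - m) * ∏ i ∈ Finset.Icc 1 (s - m), ((q : ℝ) ^ (n - m + 1 - i) + 1)

/-
Let `A s` be the adjacency matrix of the panels of type `s`; it satisfies the Hecke relation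
`A s ^ 2 = (q - 1) • A s + q • 1`. The longest element of the Weyl group is the `n`-th power of a
Coxeter element, so the opposition matrix `T` is the `n`-th power of the product of the `A s`, and
it commutes with every `A s`. Let `E` be an eigenspace of `T` with negative eigenvalue. On a common
eigenvector of the `A s` with eigenvalue `q` the matrix `T` would be positive, so the
`q`-eigenspaces of the `A s` on `E` intersect trivially and their dimensions sum to at most
`(n - 1) * dim E`. As the other eigenvalue of `A s` is `-1`, taking determinants on `E` bounds the
eigenvalue of `T` from below by `-q ^ ((n - 1) * n)`.

Hence `T + q ^ ((n - 1) * n) • 1` is positive semidefinite, and a ratio-sharp EKR-set `𝓕` attains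
equality in Hoffman's bound: every chamber outside `𝓕` is opposite to exactly `q ^ ((n - 1) * n)`
members of `𝓕`. For `q ≥ n ^ 2` this is more than `(1 - 1 / n) * |𝓕|`. If no entry of `C ∈ 𝓕` were
heavy, each `C_s` would lie in some chamber `D_s ∉ 𝓕`, and some member of `𝓕` would be opposite to
all `D_s`, hence to `C`.
-/

theorem map_prod_ofFn_pow {M N : Type*} [Monoid M] [Monoid N] (φ : M →* N) {n : ℕ}
    (A : Fin n → M) (k : ℕ) :
    φ ((List.ofFn A).prod ^ k) = (List.ofFn fun i => φ (A i)).prod ^ k := by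
  rw [map_pow, map_list_prod, List.map_ofFn]
  rfl

section HeckeQuadratic

variable {K : Type*} [Field K]

/-- The quadratic relation `t² = (q - 1) t + q` satisfied by the standard generators of an
Iwahori–Hecke algebra with parameter `q`. -/
def IsHeckeQuadratic {A : Type*} [Ring A] [Algebra K A] (q : K) (t : A) : Prop :=
  t * t = (q - 1) • t + q • 1

theorem IsHeckeQuadratic.map {A A' : Type*} [Ring A] [Algebra K A] [Ring A'] [Algebra K A']
    {q : K} {t : A} (h : IsHeckeQuadratic q t) (φ : A →ₐ[K] A') : IsHeckeQuadratic q (φ t) := by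
  rw [IsHeckeQuadratic, ← map_mul, h, map_add, map_smul, map_smul, map_one]

variable {E : Type*} [AddCommGroup E] [Module K E]

theorem IsHeckeQuadratic.apply_apply {q : K} {t : End K E} (h : IsHeckeQuadratic q t) (x : E) :
    t (t x) = (q - 1) • t x + q • x := by
  rw [← Module.End.mul_apply, h]
  rfl

theorem IsHeckeQuadratic.restrict {q : K} {t : End K E} (h : IsHeckeQuadratic q t)
    {U : Submodule K E} (hU : ∀ x ∈ U, t x ∈ U) : IsHeckeQuadratic q (t.restrict hU) :=
  LinearMap.ext fun x => Subtype.ext (h.apply_apply x)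

theorem list_prod_apply_of_forall_apply_eq_smul {q : K} {x : E} (L : List (End K E))
    (h : ∀ t ∈ L, t x = q • x) : L.prod x = q ^ L.length • x := by
  induction L with
  | nil => simp
  | cons t L ih =>
    rw [List.prod_cons, Module.End.mul_apply, ih fun u hu => h u (List.mem_cons_of_mem t hu),
      map_smul, h t List.mem_cons_self, List.length_cons, pow_succ, mul_smul]

theorem prod_ofFn_pow_apply_eq_smul {n : ℕ} (k : ℕ) {q : K} {x : E} {t : Fin n → End K E}
    (h : ∀ i, t i x = q • x) : ((List.ofFn t).prod ^ k) x = q ^ (n * k) • x := by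
  have hprod : (List.ofFn t).prod x = q ^ n • x := by
    simpa using list_prod_apply_of_forall_apply_eq_smul (List.ofFn t)
      ((List.forall_mem_ofFn_iff (P := fun u : End K E => u x = q • x)).2 h)
  simpa only [List.prod_replicate, List.length_replicate, pow_mul] using
    list_prod_apply_of_forall_apply_eq_smul (List.replicate k (List.ofFn t).prod)
      fun u hu => List.eq_of_mem_replicate hu ▸ hprod

theorem semiconj_list_prod_map {ι E' : Type*} [AddCommGroup E'] [Module K E'] {f : E → E'}
    {t : ι → End K E} {u : ι → End K E'} (h : ∀ i, Function.Semiconj f (t i) (u i))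
    (L : List ι) : Function.Semiconj f (L.map t).prod (L.map u).prod := by
  induction L with
  | nil => exact Function.Semiconj.id_right
  | cons i L ih => simpa only [List.map_cons, List.prod_cons, Module.End.coe_mul] using
      (h i).comp_right ih

theorem sum_finrank_add_finrank_le_of_iInf_eq_bot [FiniteDimensional K E] {ι : Type*} [Fintype ι]
    {W : ι → Submodule K E} (h : ⨅ i, W i = ⊥) :
    ∑ i, finrank K (W i) + finrank K E ≤ Fintype.card ι * finrank K E := by
  have hinj : Function.Injective (LinearMap.pi fun i => (W i).mkQ) := by
    simpa only [← LinearMap.ker_eq_bot, LinearMap.ker_pi, Submodule.ker_mkQ] using h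
  calc ∑ i, finrank K (W i) + finrank K E
      ≤ ∑ i, finrank K (W i) + ∑ i, finrank K (E ⧸ W i) := by
        gcongr
        simpa only [Module.finrank_pi_fintype] using
          LinearMap.finrank_le_finrank_of_injective hinj
    _ = Fintype.card ι * finrank K E := by
        simp_rw [← Finset.sum_add_distrib, add_comm (finrank K (W _)),
          Submodule.finrank_quotient_add_finrank, Finset.sum_const, Finset.card_univ, smul_eq_mul]

variable [LinearOrder K] [IsStrictOrderedRing K] [FiniteDimensional K E]

theorem IsHeckeQuadratic.abs_det {q : K} (hq : 0 ≤ q) {t : End K E} (h : IsHeckeQuadratic q t) :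
    |LinearMap.det t| = q ^ finrank K (t.eigenspace q) := by
  set W := t.eigenspace q
  have ht : ∀ x ∈ W, t x = q • x := fun x hx => Module.End.mem_eigenspace_iff.1 hx
  have hW : W ≤ W.comap t := fun x hx => by
    rw [Submodule.mem_comap, ht x hx]
    exact W.smul_mem q hx
  have on_sub : t.restrict hW = q • (LinearMap.id : W →ₗ[K] W) :=
    LinearMap.ext fun x => Subtype.ext (ht x x.2)
  have on_quotient : W.mapQ W t hW = (-1 : K) • LinearMap.id := by
    ext x
    have : t x - (-1 : K) • x ∈ W := by
      rw [Module.End.mem_eigenspace_iff, map_sub, h.apply_apply, map_smul]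
      module
    simpa [← Submodule.Quotient.mk_neg, Submodule.Quotient.eq] using this
  rw [LinearMap.det_eq_det_mul_det W t hW, on_sub, on_quotient, LinearMap.det_smul,
    LinearMap.det_smul, LinearMap.det_id, LinearMap.det_id]
  simp [abs_mul, abs_of_nonneg hq]

/- The eigenspaces of the `t i` for `q` have trivial intersection, which bounds the sum of their
dimensions and hence the determinant of the product. -/
theorem neg_pow_le_of_prod_ofFn_pow_eq_smul_one [Nontrivial E] {n k : ℕ} {q μ : K} (hq : 1 ≤ q)
    {t : Fin n → End K E} (ht : ∀ i, IsHeckeQuadratic q (t i))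
    (hprod : (List.ofFn t).prod ^ k = μ • 1) : -q ^ ((n - 1) * k) ≤ μ := by
  have hq₀ : 0 ≤ q := zero_le_one.trans hq
  rcases le_or_gt 0 μ with hμ | hμ
  · exact (neg_nonpos.2 (by positivity)).trans hμ
  have iInf_eq_bot : ⨅ i, (t i).eigenspace q = ⊥ := by
    refine (Submodule.eq_bot_iff _).2 fun x hx => ?_
    have htx : ∀ i, t i x = q • x := fun i =>
      Module.End.mem_eigenspace_iff.1 ((Submodule.mem_iInf _).1 hx i)
    have hx' := prod_ofFn_pow_apply_eq_smul k htx
    rw [hprod, LinearMap.smul_apply, Module.End.one_apply, ← sub_eq_zero, ← sub_smul] at hx'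
    exact (smul_eq_zero.1 hx').resolve_left (sub_neg.2 (hμ.trans_le (by positivity))).ne
  have sum_le : ∑ i, finrank K ((t i).eigenspace q) ≤ (n - 1) * finrank K E := by
    have := sum_finrank_add_finrank_le_of_iInf_eq_bot iInf_eq_bot
    rw [Fintype.card_fin] at this
    rw [Nat.sub_mul, one_mul]
    omega
  have hdet : |μ| ^ finrank K E = q ^ ((∑ i, finrank K ((t i).eigenspace q)) * k) := by
    have := congrArg (fun u => |LinearMap.det u|) hprod
    simp only [LinearMap.det_smul, map_one, mul_one, map_pow, map_list_prod, List.map_ofFn,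
      List.prod_ofFn, abs_pow, Finset.abs_prod, Function.comp_apply, (ht _).abs_det hq₀] at this
    rw [← this, Finset.prod_pow_eq_pow_sum, pow_mul]
  have hle : |μ| ^ finrank K E ≤ (q ^ ((n - 1) * k)) ^ finrank K E := by
    rw [hdet, ← pow_mul, mul_right_comm]
    gcongr
  have := (pow_le_pow_iff_left₀ (abs_nonneg μ) (by positivity) finrank_pos.ne').1 hle
  exact neg_le.1 ((neg_le_abs μ).trans this)

theorem neg_pow_le_of_hasEigenvalue {n k : ℕ} {q μ : K} (hq : 1 ≤ q)
    {t : Fin n → End K E} (ht : ∀ i, IsHeckeQuadratic q (t i))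
    (hcomm : ∀ i, Commute ((List.ofFn t).prod ^ k) (t i))
    (hμ : ((List.ofFn t).prod ^ k).HasEigenvalue μ) : -q ^ ((n - 1) * k) ≤ μ := by
  set U := ((List.ofFn t).prod ^ k).eigenspace μ
  have hU : ∀ i, ∀ x ∈ U, t i x ∈ U := fun i x hx =>
    Module.End.mapsTo_genEigenspace_of_comm (hcomm i) μ 1 hx
  obtain ⟨x, hx⟩ := hμ.exists_hasEigenvector
  have : Nontrivial U := ⟨⟨x, hx.1⟩, 0, fun h => hx.2 (congrArg Subtype.val h)⟩
  refine neg_pow_le_of_prod_ofFn_pow_eq_smul_one hq (fun i => (ht i).restrict (hU i))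
    (k := k) (LinearMap.ext fun y => Subtype.ext ?_)
  have semiconj : Function.Semiconj U.subtype
      (List.ofFn fun i => (t i).restrict (hU i)).prod (List.ofFn t).prod := by
    simp only [List.ofFn_eq_map]
    exact semiconj_list_prod_map (t := fun i => (t i).restrict (hU i)) (fun i _ => rfl) _
  have := semiconj.iterate_right k y
  simp only [← Module.End.pow_apply] at this
  exact this.trans (Module.End.mem_eigenspace_iff.1 y.2)

end HeckeQuadratic

section EntrywiseNonneg

open Matrix

variable {X : Type*} [Fintype X]

theorem prod_ofFn_pow_mulVec_eq_smul [DecidableEq X] {n : ℕ} (k : ℕ) {q : ℝ} {v : X → ℝ}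
    {A : Fin n → Matrix X X ℝ} (h : ∀ i, A i *ᵥ v = q • v) :
    (List.ofFn A).prod ^ k *ᵥ v = q ^ (n * k) • v := by
  rw [← toLinAlgEquiv'_apply, ← prod_ofFn_pow_apply_eq_smul k
    (t := fun i => toLinAlgEquiv' (A i)) h]
  exact LinearMap.congr_fun (map_prod_ofFn_pow
    ((toLinAlgEquiv' : Matrix X X ℝ ≃ₐ[ℝ] End ℝ (X → ℝ)) : Matrix X X ℝ →* End ℝ (X → ℝ)) A k) v

theorem mul_apply_nonneg {M N : Matrix X X ℝ} (hM : ∀ x y, 0 ≤ M x y) (hN : ∀ x y, 0 ≤ N x y)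
    (x z : X) : 0 ≤ (M * N) x z :=
  Finset.sum_nonneg fun y _ => mul_nonneg (hM x y) (hN y z)

theorem one_le_mul_apply {M N : Matrix X X ℝ} (hM : ∀ x y, 0 ≤ M x y) (hN : ∀ x y, 0 ≤ N x y)
    {x y z : X} (hxy : 1 ≤ M x y) (hyz : 1 ≤ N y z) : 1 ≤ (M * N) x z :=
  (one_le_mul_of_one_le_of_one_le hxy hyz).trans <|
    Finset.single_le_sum (f := fun y => M x y * N y z)
      (fun y _ => mul_nonneg (hM x y) (hN y z)) (Finset.mem_univ y)

theorem list_prod_apply_nonneg [DecidableEq X] {L : List (Matrix X X ℝ)}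
    (h : ∀ M ∈ L, ∀ x y, 0 ≤ M x y) (x y : X) : 0 ≤ L.prod x y := by
  induction L generalizing x y with
  | nil => exact zero_le_one_elem x y
  | cons M L ih =>
    rw [List.prod_cons]
    exact mul_apply_nonneg (h M List.mem_cons_self)
      (ih fun N hN => h N (List.mem_cons_of_mem M hN)) x y

theorem one_le_prod_ofFn_apply [DecidableEq X] {n : ℕ} {A : Fin n → Matrix X X ℝ}
    (hA : ∀ i x y, 0 ≤ A i x y) {w : ℕ → X} (hw : ∀ i : Fin n, 1 ≤ A i (w i) (w (i + 1))) :
    1 ≤ (List.ofFn A).prod (w 0) (w n) := by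
  induction n generalizing w with
  | zero => simp
  | succ n ih =>
    rw [List.ofFn_succ, List.prod_cons]
    refine one_le_mul_apply (hA 0)
      (list_prod_apply_nonneg (List.forall_mem_ofFn_iff.2 fun i => hA i.succ)) (hw 0) ?_
    exact ih (fun i => hA i.succ) (w := fun j => w (j + 1)) fun i => hw i.succ

theorem eq_of_apply_le_of_mulVec_one_eq {M N : Matrix X X ℝ} (hle : ∀ x y, M x y ≤ N x y)
    (hrow : M *ᵥ 1 = N *ᵥ 1) : M = N := by
  ext x y
  have hsum : ∑ y, M x y = ∑ y, N x y := by
    simpa [mulVec, dotProduct] using congrFun hrow x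
  exact (Finset.sum_eq_sum_iff_of_le fun y _ => hle x y).1 hsum y (Finset.mem_univ y)

end EntrywiseNonneg

section RelMatrix

open Matrix

variable {X : Type*}

/-- The adjacency matrix of a relation: the entry at `x`, `y` is `1` if `r x y` and `0`
otherwise. -/
noncomputable def relMatrix (r : X → X → Prop) : Matrix X X ℝ :=
  Matrix.of fun x y => if r x y then 1 else 0

theorem relMatrix_apply (r : X → X → Prop) (x y : X) :
    relMatrix r x y = if r x y then 1 else 0 :=
  rfl

theorem relMatrix_isSymm {r : X → X → Prop} (hr : ∀ x y, r x y → r y x) :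
    (relMatrix r).IsSymm := by
  ext x y
  simp only [transpose_apply, relMatrix_apply, Iff.intro (hr x y) (hr y x)]

theorem relMatrix_ne_and_eq_sub_one [DecidableEq X] {r : X → X → Prop}
    (hr : ∀ x, r x x) :
    relMatrix (fun x y => x ≠ y ∧ r x y) = relMatrix r - 1 := by
  ext x y
  rw [Matrix.sub_apply, relMatrix_apply, relMatrix_apply]
  rcases eq_or_ne x y with rfl | h
  · simp [hr]
  · simp [h]

variable [Fintype X]

theorem relMatrix_mulVec_indicator_one (r : X → X → Prop) (S : Set X) (x : X) :
    (relMatrix r *ᵥ S.indicator 1) x = ({y ∈ S | r x y} : Set X).ncard := by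
  simp only [mulVec, dotProduct, relMatrix_apply, Set.indicator_apply, Pi.one_apply, mul_ite,
    mul_one, mul_zero, ← ite_and, Finset.sum_boole, Set.ncard_eq_toFinset_card',
    Set.toFinset_ofPred]

theorem relMatrix_mulVec_one (r : X → X → Prop) (x : X) :
    (relMatrix r *ᵥ 1) x = ({y | r x y} : Set X).ncard := by
  simpa using relMatrix_mulVec_indicator_one r Set.univ x

theorem relMatrix_mul_relMatrix_apply (r r' : X → X → Prop) (x z : X) :
    (relMatrix r * relMatrix r') x z = ({y | r x y ∧ r' y z} : Set X).ncard := by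
  simp only [mul_apply, relMatrix_apply, mul_ite, mul_one, mul_zero, ← ite_and, Finset.sum_boole,
    Set.ncard_eq_toFinset_card', Set.toFinset_ofPred, and_comm]

variable {r : X → X → Prop}

theorem relMatrix_ne_and_mulVec_one (hr : ∀ x, r x x) {q : ℕ}
    (hq : ∀ x, ({y | r x y} : Set X).ncard = q + 1) :
    relMatrix (fun x y => x ≠ y ∧ r x y) *ᵥ 1 = (q : ℝ) • 1 := by
  ext x
  rw [relMatrix_ne_and_eq_sub_one hr, sub_mulVec, one_mulVec, Pi.sub_apply, relMatrix_mulVec_one,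
    hq]
  simp

theorem isHeckeQuadratic_relMatrix_ne_and [DecidableEq X] (hr : Equivalence r) {q : ℕ}
    (hq : ∀ x, ({y | r x y} : Set X).ncard = q + 1) :
    IsHeckeQuadratic (q : ℝ) (relMatrix fun x y => x ≠ y ∧ r x y) := by
  have sq : relMatrix r * relMatrix r = (q + 1 : ℝ) • relMatrix r := by
    ext x z
    rw [relMatrix_mul_relMatrix_apply, Matrix.smul_apply, relMatrix_apply]
    by_cases h : r x z
    · have : {y | r x y ∧ r y z} = {y | r x y} :=
        Set.ext fun y => and_iff_left_of_imp fun hxy => hr.trans (hr.symm hxy) h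
      simp [this, hq, h]
    · have : {y | r x y ∧ r y z} = ∅ :=
        Set.eq_empty_of_forall_notMem fun y hy => h (hr.trans hy.1 hy.2)
      simp [this, h]
  rw [relMatrix_ne_and_eq_sub_one hr.refl, IsHeckeQuadratic]
  calc (relMatrix r - 1) * (relMatrix r - 1)
      = relMatrix r * relMatrix r - (2 : ℝ) • relMatrix r + 1 := by
        rw [two_smul]
        noncomm_ring
    _ = ((q : ℝ) - 1) • (relMatrix r - 1) + (q : ℝ) • 1 := by
        rw [sq]
        module

end RelMatrix

section HoffmanBound

open Matrix

variable {X : Type*} [Fintype X]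

theorem posSemidef_prod_ofFn_pow_add_smul_one [DecidableEq X] {n k : ℕ} {q : ℝ} (hq : 1 ≤ q)
    {A : Fin n → Matrix X X ℝ} (hA : ∀ i, IsHeckeQuadratic q (A i))
    (hcomm : ∀ i, Commute ((List.ofFn A).prod ^ k) (A i))
    (hsymm : ((List.ofFn A).prod ^ k).IsSymm) :
    ((List.ofFn A).prod ^ k + q ^ ((n - 1) * k) • 1).PosSemidef := by
  rw [posSemidef_iff_isHermitian_and_spectrum_nonneg]
  constructor
  · simp [IsHermitian, conjTranspose_eq_transpose_of_trivial, hsymm.eq]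
  intro a ha
  rw [← Algebra.algebraMap_eq_smul_one, ← spectrum.add_singleton_eq, Set.add_singleton] at ha
  obtain ⟨μ, hμ, rfl⟩ := ha
  let φ : Matrix X X ℝ ≃ₐ[ℝ] End ℝ (X → ℝ) := toLinAlgEquiv'
  have map_prod : φ ((List.ofFn A).prod ^ k) = (List.ofFn fun i => φ (A i)).prod ^ k :=
    map_prod_ofFn_pow (φ : Matrix X X ℝ →* End ℝ (X → ℝ)) A k
  rw [← AlgEquiv.spectrum_eq φ, ← Module.End.hasEigenvalue_iff_mem_spectrum, map_prod] at hμ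
  exact neg_le_iff_add_nonneg.1 (neg_pow_le_of_hasEigenvalue hq (fun i => (hA i).map φ.toAlgHom)
    (fun i => map_prod ▸ (hcomm i).map φ) hμ)

/- Equality in Hoffman's bound: the component of `f` orthogonal to `1` lies in the kernel of the
positive semidefinite matrix `T + μ • 1`. -/
theorem mulVec_eq_of_posSemidef_add_smul_one [DecidableEq X] {T : Matrix X X ℝ} {κ μ : ℝ}
    (hpos : (T + μ • 1).PosSemidef) (hsymm : T.IsSymm) (hrow : T *ᵥ 1 = κ • 1) (hκμ : κ + μ ≠ 0)
    {f : X → ℝ} (hT : f ⬝ᵥ T *ᵥ f = 0) (hf : f ⬝ᵥ f = f ⬝ᵥ 1)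
    (hsharp : (κ + μ) * (f ⬝ᵥ 1) = μ * Fintype.card X) : T *ᵥ f = μ • (1 - f) := by
  set α := μ / (κ + μ)
  have hα : (κ + μ) * α = μ := mul_div_cancel₀ μ hκμ
  have shifted : (T + μ • 1) *ᵥ (f - α • 1) = T *ᵥ f - μ • (1 - f) := by
    rw [mulVec_sub, mulVec_smul, add_mulVec, add_mulVec, smul_mulVec, smul_mulVec, one_mulVec,
      one_mulVec, hrow, ← add_smul, smul_smul, mul_comm α, hα, smul_sub]
    abel
  have one_dot : (1 : X → ℝ) ⬝ᵥ T *ᵥ f = κ * (f ⬝ᵥ 1) := by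
    rw [dotProduct_mulVec, ← mulVec_transpose, hsymm.eq, hrow, smul_dotProduct, dotProduct_comm,
      smul_eq_mul]
  have quadratic_zero : star (f - α • 1) ⬝ᵥ (T + μ • 1) *ᵥ (f - α • 1) = 0 := by
    have one_dot_one : (1 : X → ℝ) ⬝ᵥ 1 = Fintype.card X := by simp
    rw [shifted, star_trivial]
    simp only [sub_dotProduct, dotProduct_sub, dotProduct_smul, smul_dotProduct, smul_eq_mul,
      hT, hf, one_dot, one_dot_one, dotProduct_comm 1 f]
    linear_combination -α * hsharp
  rw [hpos.dotProduct_mulVec_zero_iff, shifted] at quadratic_zero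
  exact sub_eq_zero.1 quadratic_zero

end HoffmanBound

section Covers

variable {F V : Type*} [Field F] [AddCommGroup V] [Module F V]

/-- The subspaces between `L` and `U` of dimension one more than `L`, that is, the points of the
projective space of `U / L`. -/
def coversIn (L U : Submodule F V) : Set (Submodule F V) :=
  {X | L ≤ X ∧ X ≤ U ∧ finrank F X = finrank F L + 1}

variable [FiniteDimensional F V]

theorem finrank_map_mkQ_add_finrank {L X : Submodule F V} (h : L ≤ X) :
    finrank F (X.map L.mkQ) + finrank F L = finrank F X := by
  have := (L.mkQ.domRestrict X).finrank_range_add_finrank_ker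
  rwa [LinearMap.range_domRestrict, LinearMap.ker_domRestrict, Submodule.ker_mkQ,
    (Submodule.comapSubtypeEquivOfLe h).finrank_eq] at this

theorem coversIn_eq_image {L U : Submodule F V} (h : L ≤ U) :
    coversIn L U = (fun H : Submodule F (U.map L.mkQ) =>
      (H.map (U.map L.mkQ).subtype).comap L.mkQ) '' {H | finrank F H = 1} := by
  have finrank_comap (W : Submodule F (V ⧸ L)) :
      finrank F (W.comap L.mkQ) = finrank F W + finrank F L := by
    rw [← finrank_map_mkQ_add_finrank (L.le_comap_mkQ W),
      Submodule.map_comap_eq_of_surjective L.mkQ_surjective]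
  ext X
  constructor
  · rintro ⟨hLX, hXU, hX⟩
    have hmap : (((X.map L.mkQ).comap (U.map L.mkQ).subtype).map (U.map L.mkQ).subtype) =
        X.map L.mkQ := by
      rw [Submodule.map_comap_subtype, inf_eq_right.2 (Submodule.map_mono hXU)]
    refine ⟨(X.map L.mkQ).comap (U.map L.mkQ).subtype, ?_, ?_⟩
    · rw [Set.mem_ofPred_eq, ← Submodule.finrank_map_subtype_eq, hmap]
      have := finrank_map_mkQ_add_finrank hLX
      omega
    · beta_reduce
      rw [hmap, Submodule.comap_map_mkQ, sup_eq_right.2 hLX]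
  · rintro ⟨H, hH, rfl⟩
    refine ⟨L.le_comap_mkQ _, ?_, ?_⟩
    · calc _ ≤ (U.map L.mkQ).comap L.mkQ := Submodule.comap_mono (Submodule.map_subtype_le _ _)
        _ = U := by rw [Submodule.comap_map_mkQ, sup_eq_right.2 h]
    · rw [finrank_comap, Submodule.finrank_map_subtype_eq, hH, add_comm]

theorem ncard_coversIn [Finite F] {L U : Submodule F V} (h : L ≤ U) :
    (coversIn L U).ncard = ∑ i ∈ Finset.range (finrank F U - finrank F L), Nat.card F ^ i := by
  have hinj : Function.Injective fun H : Submodule F (U.map L.mkQ) =>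
      (H.map (U.map L.mkQ).subtype).comap L.mkQ :=
    (Submodule.comap_injective_of_surjective L.mkQ_surjective).comp
      (Submodule.map_injective_of_injective (U.map L.mkQ).injective_subtype)
  have hdim : finrank F (U.map L.mkQ) = finrank F U - finrank F L := by
    have := finrank_map_mkQ_add_finrank h
    omega
  rw [coversIn_eq_image h, Set.ncard_image_of_injective _ hinj, ← Nat.card_coe_set_eq,
    ← Projectivization.card_of_finrank F _ hdim]
  exact (Nat.card_congr (Projectivization.equivSubmodule F (U.map L.mkQ))).symm

theorem ncard_coversIn_of_finrank_eq_add_two [Finite F] {L U : Submodule F V} (h : L ≤ U)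
    (hU : finrank F U = finrank F L + 2) : (coversIn L U).ncard = Nat.card F + 1 := by
  rw [ncard_coversIn h, hU, Nat.add_sub_cancel_left]
  simp [Finset.sum_range_succ, add_comm]

theorem ncard_coversIn_diff_coversIn [Finite F] {L H U : Submodule F V} (hLH : L ≤ H) (hHU : H ≤ U)
    (hU : finrank F U = finrank F H + 1) :
    (coversIn L U \ coversIn L H).ncard = Nat.card F ^ (finrank F H - finrank F L) := by
  have : Finite V := Module.finite_of_finite F
  have hsub : coversIn L H ⊆ coversIn L U := fun X hX => ⟨hX.1, hX.2.1.trans hHU, hX.2.2⟩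
  rw [Set.ncard_sdiff hsub, ncard_coversIn hLH, ncard_coversIn (hLH.trans hHU), hU,
    Nat.sub_add_comm (Submodule.finrank_mono hLH), Finset.sum_range_succ, Nat.add_sub_cancel_left]

theorem sup_span_singleton_mem_coversIn {L U : Submodule F V} (h : L ≤ U) {x : V} (hxU : x ∈ U)
    (hxL : x ∉ L) : L ⊔ Submodule.span F {x} ∈ coversIn L U :=
  ⟨le_sup_left, sup_le h ((Submodule.span_singleton_le_iff_mem x U).2 hxU),
    Submodule.finrank_sup_span_singleton hxL⟩

theorem eq_sup_span_singleton {L X : Submodule F V} (hle : L ≤ X)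
    (hX : finrank F X = finrank F L + 1) {x : V} (hxX : x ∈ X) (hxL : x ∉ L) :
    X = L ⊔ Submodule.span F {x} :=
  (Submodule.eq_of_le_of_finrank_eq
    (sup_le hle ((Submodule.span_singleton_le_iff_mem x X).2 hxX))
    ((Submodule.finrank_sup_span_singleton hxL).trans hX.symm)).symm

theorem exists_ne_zero_mem_inf {X Y : Submodule F V}
    (h : finrank F V < finrank F X + finrank F Y) : ∃ x ≠ 0, x ∈ X ⊓ Y := by
  by_contra! hxy
  have := Submodule.finrank_add_finrank_le_of_disjoint
    (disjoint_iff.2 ((Submodule.eq_bot_iff _).2 fun x hx => by_contra fun h₀ => hxy x h₀ hx))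
  omega

/- Any `x ≠ 0` in `H ⊓ U` spans that intersection, which meets `K` trivially, so the exceptional
cover is `L ⊔ ⟨x⟩`. -/
theorem existsUnique_coversIn_not_disjoint {L U K H : Submodule F V} (hLU : L ≤ U) (hKH : K ≤ H)
    (hH : finrank F H = finrank F K + 1) (hKU : Disjoint K U) (hHL : Disjoint H L)
    (hHU : finrank F V < finrank F H + finrank F U) :
    ∃! X, X ∈ coversIn L U ∧ ¬ Disjoint H X := by
  simp only [Submodule.disjoint_def] at hKU hHL ⊢
  obtain ⟨x, hx, hxH, hxU⟩ := exists_ne_zero_mem_inf hHU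
  have hxL : x ∉ L := fun h => hx (hHL x hxH h)
  refine ⟨L ⊔ Submodule.span F {x}, ⟨sup_span_singleton_mem_coversIn hLU hxU hxL, fun h =>
    hx (h x hxH (Submodule.mem_sup_right (Submodule.mem_span_singleton_self x)))⟩, ?_⟩
  rintro X ⟨⟨hLX, hXU, hX⟩, hHX⟩
  push Not at hHX
  obtain ⟨y, hyH, hyX, hy⟩ := hHX
  have hyK : y ∉ K := fun h => hy (hKU y h (hXU hyX))
  have hxX : x ∈ X := by
    obtain ⟨k, hk, z, hz, rfl⟩ := Submodule.mem_sup.1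
      (eq_sup_span_singleton hKH hH hyH hyK ▸ hxH)
    have hzX : z ∈ X := (Submodule.span_singleton_le_iff_mem y X).2 hyX hz
    have hkU : k ∈ U := by simpa using U.sub_mem hxU (hXU hzX)
    rwa [hKU k hk hkU, zero_add]
  exact eq_sup_span_singleton hLX hX hxX hxL

theorem ncard_coversIn_disjoint [Finite F] {L U K H : Submodule F V} (hLU : L ≤ U) (hKH : K ≤ H)
    (hU : finrank F U = finrank F L + 2) (hH : finrank F H = finrank F K + 1)
    (hKU : Disjoint K U) (hHL : Disjoint H L) (hHU : finrank F V < finrank F H + finrank F U) :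
    {X ∈ coversIn L U | Disjoint H X}.ncard = Nat.card F := by
  obtain ⟨X₀, ⟨hX₀, hX₀H⟩, hunique⟩ := existsUnique_coversIn_not_disjoint hLU hKH hH hKU hHL hHU
  have hdiff : {X ∈ coversIn L U | Disjoint H X} = coversIn L U \ {X₀} := by
    refine Set.ext fun X => and_congr_right fun hX => ⟨?_, fun hne => ?_⟩
    · rintro hdisj rfl
      exact hX₀H hdisj
    · exact by_contra fun hdisj => hne (hunique X ⟨hX, hdisj⟩)
  rw [hdiff, Set.ncard_sdiff_singleton_of_mem hX₀, ncard_coversIn_of_finrank_eq_add_two hLU hU,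
    Nat.add_sub_cancel]

end Covers

section Symplectic

variable {F V : Type} [Field F] [AddCommGroup V] [Module F V] {B : V →ₗ[F] V →ₗ[F] F}

theorem mem_bperp {W : Submodule F V} {x : V} : x ∈ bperp B W ↔ ∀ w ∈ W, B w x = 0 := by
  simp [bperp]

theorem IsAltForm.eq_zero_symm (hA : IsAltForm B) {x y : V} (h : B x y = 0) : B y x = 0 :=
  LinearMap.IsAlt.isRefl (B := B) hA x y h

theorem IsAltForm.nondegenerate (hA : IsAltForm B) (hN : NondegForm B) :
    LinearMap.BilinForm.Nondegenerate B :=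
  ⟨hN, fun y hy => hN y fun x => hA.eq_zero_symm (hy x)⟩

theorem bperp_eq_orthogonal (B : V →ₗ[F] V →ₗ[F] F) (W : Submodule F V) :
    bperp B W = LinearMap.BilinForm.orthogonal B W :=
  Submodule.ext fun _ => mem_bperp.trans LinearMap.BilinForm.mem_orthogonal_iff.symm

theorem bperp_anti {X Y : Submodule F V} (h : X ≤ Y) : bperp B Y ≤ bperp B X :=
  fun _ hx => mem_bperp.2 fun w hw => mem_bperp.1 hx w (h hw)

theorem IsAltForm.le_bperp_comm (hA : IsAltForm B) {X Y : Submodule F V} :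
    X ≤ bperp B Y ↔ Y ≤ bperp B X :=
  ⟨fun h _ hy => mem_bperp.2 fun _ hx => hA.eq_zero_symm (mem_bperp.1 (h hx) _ hy),
    fun h _ hx => mem_bperp.2 fun _ hy => hA.eq_zero_symm (mem_bperp.1 (h hy) _ hx)⟩

theorem IsTotIso.le_bperp {L X : Submodule F V} (hX : IsTotIso B X) (hLX : L ≤ X) :
    X ≤ bperp B L :=
  fun x hx => mem_bperp.2 fun w hw => hX w (hLX hw) x hx

theorem IsTotIso.mono {L X : Submodule F V} (hX : IsTotIso B X) (hLX : L ≤ X) : IsTotIso B L :=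
  fun u hu w hw => hX u (hLX hu) w (hLX hw)

theorem isTotIso_span {S : Set V} (h : ∀ x ∈ S, ∀ y ∈ S, B x y = 0) :
    IsTotIso B (Submodule.span F S) := fun _ hu _ hw => by
  induction hu, hw using Submodule.span_induction₂ with
  | mem_mem x y hx hy => exact h x hx y hy
  | zero_left => simp
  | zero_right => simp
  | add_left _ _ _ _ _ _ h₁ h₂ => rw [map_add, LinearMap.add_apply, h₁, h₂, add_zero]
  | add_right _ _ _ _ _ _ h₁ h₂ => rw [map_add, h₁, h₂, add_zero]
  | smul_left _ _ _ _ _ h => rw [map_smul, LinearMap.smul_apply, h, smul_zero]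
  | smul_right _ _ _ _ _ h => rw [map_smul, h, smul_zero]

theorem IsTotIso.sup_span_singleton (hA : IsAltForm B) {L : Submodule F V} (hL : IsTotIso B L)
    {x : V} (hx : x ∈ bperp B L) : IsTotIso B (L ⊔ Submodule.span F {x}) := by
  rw [← Submodule.span_eq L, ← Submodule.span_union]
  refine isTotIso_span ?_
  rintro u (hu | rfl) w (hw | rfl)
  · exact hL u hu w hw
  · exact mem_bperp.1 hx u hu
  · exact hA.eq_zero_symm (mem_bperp.1 hx w hw)
  · exact hA _

variable [FiniteDimensional F V]

theorem isTotIso_of_mem_coversIn (hA : IsAltForm B) {L X : Submodule F V} (hL : IsTotIso B L)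
    (hX : X ∈ coversIn L (bperp B L)) : IsTotIso B X := by
  obtain ⟨hLX, hXL, hdim⟩ := hX
  obtain ⟨x, hxX, hxL⟩ := SetLike.exists_of_lt
    (Submodule.lt_of_le_of_finrank_lt_finrank hLX (by omega))
  rw [eq_sup_span_singleton hLX hdim hxX hxL]
  exact hL.sup_span_singleton hA (hXL hxX)

theorem finrank_bperp (hA : IsAltForm B) (hN : NondegForm B) (W : Submodule F V) :
    finrank F (bperp B W) = finrank F V - finrank F W := by
  rw [bperp_eq_orthogonal, LinearMap.BilinForm.finrank_orthogonal (hA.nondegenerate hN)]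

theorem bperp_bperp (hA : IsAltForm B) (hN : NondegForm B) (W : Submodule F V) :
    bperp B (bperp B W) = W := by
  rw [bperp_eq_orthogonal, bperp_eq_orthogonal]
  exact LinearMap.BilinForm.orthogonal_orthogonal (hA.nondegenerate hN)
    (LinearMap.IsAlt.isRefl (B := B) hA) W

/- The dimensions force `V = S^⊥ ⊕ T`, so a vector of `S` orthogonal to `T` is orthogonal to `V`. -/
theorem disjoint_bperp_symm (hA : IsAltForm B) (hN : NondegForm B) {S T : Submodule F V}
    (hdim : finrank F S = finrank F T) (h : Disjoint (bperp B S) T) :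
    Disjoint (bperp B T) S := by
  have sup_eq_top : bperp B S ⊔ T = ⊤ := by
    apply Submodule.eq_top_of_disjoint _ _ _ h
    rw [finrank_bperp hA hN, hdim]
    exact (Nat.sub_add_cancel T.finrank_le).ge
  refine Submodule.disjoint_def.2 fun x hxT hxS => hN x fun w => ?_
  obtain ⟨y, hy, z, hz, rfl⟩ := Submodule.mem_sup.1 (sup_eq_top ▸ Submodule.mem_top : w ∈ _)
  rw [map_add, mem_bperp.1 hy x hxS, zero_add]
  exact hA.eq_zero_symm (mem_bperp.1 hxT z hz)

end Symplectic

section Flags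

variable {F V : Type} [Field F] [AddCommGroup V] [Module F V] {B : V →ₗ[F] V →ₗ[F] F}

/-- A chain of totally isotropic subspaces of dimensions `1, …, m`; if `V` has dimension `2 * m`
these are the chambers. -/
abbrev FullFlag (B : V →ₗ[F] V →ₗ[F] F) (m : ℕ) := SFlag B (Finset.Icc 1 m)

namespace SFlag

theorem ext_space {J : Finset ℕ} {C D : SFlag B J} (h : ∀ i ∈ J, C.space i = D.space i) :
    C = D := by
  have hspace : C.space = D.space := funext fun i =>
    if hi : i ∈ J then h i hi else (C.eq_bot i hi).trans (D.eq_bot i hi).symm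
  cases C
  cases D
  cases hspace
  rfl

instance [Finite V] (J : Finset ℕ) : Finite (SFlag B J) :=
  Finite.of_injective (fun (C : SFlag B J) (i : J) => C.space i) fun _ _ h =>
    ext_space fun i hi => congrFun h ⟨i, hi⟩

noncomputable instance [Finite V] (J : Finset ℕ) : Fintype (SFlag B J) :=
  Fintype.ofFinite _

variable {m : ℕ}

theorem space_zero (C : FullFlag B m) : C.space 0 = ⊥ :=
  C.eq_bot 0 (by simp)

theorem isTotIso_space (C : FullFlag B m) (i : ℕ) : IsTotIso B (C.space i) := by
  by_cases h : i ∈ Finset.Icc 1 m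
  · exact C.isotropic i h
  · rw [C.eq_bot i h]
    rintro u hu w -
    simp [(Submodule.mem_bot F).1 hu]

theorem finrank_space (C : FullFlag B m) {i : ℕ} (hi : i ≤ m) : finrank F (C.space i) = i := by
  rcases Nat.eq_zero_or_pos i with rfl | h
  · rw [C.space_zero, finrank_bot]
  · exact C.finrank_eq i (Finset.mem_Icc.2 ⟨h, hi⟩)

theorem space_mono (C : FullFlag B m) {i j : ℕ} (hij : i ≤ j) (hj : j ≤ m) :
    C.space i ≤ C.space j := by
  rcases Nat.eq_zero_or_pos i with rfl | h
  · simp [C.space_zero]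
  · exact C.mono i (Finset.mem_Icc.2 ⟨h, hij.trans hj⟩) j
      (Finset.mem_Icc.2 ⟨h.trans_le hij, hj⟩) hij

variable [FiniteDimensional F V]

/-- The flag with entries `W 1 ≤ ⋯ ≤ W m`. -/
noncomputable def ofChain (W : ℕ → Submodule F V) (hiso : IsTotIso B (W m))
    (hdim : ∀ i ≤ m, finrank F (W i) = i) (hmono : ∀ i < m, W i ≤ W (i + 1)) : FullFlag B m :=
  have mono (i j : ℕ) (hij : i ≤ j) (hj : j ≤ m) : W i ≤ W j := by
    induction j, hij using Nat.le_induction with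
    | base => exact le_rfl
    | succ j _ ih => exact (ih (Nat.le_of_succ_le hj)).trans (hmono j hj)
  { space := fun i => if i ≤ m then W i else ⊥
    isotropic := fun i hi => by
      rw [if_pos (Finset.mem_Icc.1 hi).2]
      exact hiso.mono (mono i m (Finset.mem_Icc.1 hi).2 le_rfl)
    finrank_eq := fun i hi => by
      rw [if_pos (Finset.mem_Icc.1 hi).2, hdim i (Finset.mem_Icc.1 hi).2]
    mono := fun i hi j hj hij => by
      rw [if_pos (Finset.mem_Icc.1 hi).2, if_pos (Finset.mem_Icc.1 hj).2]
      exact mono i j hij (Finset.mem_Icc.1 hj).2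
    eq_bot := fun i hi => by
      split_ifs with him
      · obtain rfl : i = 0 := by
          rw [Finset.mem_Icc] at hi
          omega
        exact Submodule.finrank_eq_zero.1 (hdim 0 him)
      · rfl }

theorem ofChain_space {W : ℕ → Submodule F V} (hiso : IsTotIso B (W m))
    (hdim : ∀ i ≤ m, finrank F (W i) = i) (hmono : ∀ i < m, W i ≤ W (i + 1)) {i : ℕ}
    (hi : i ≤ m) : (ofChain W hiso hdim hmono).space i = W i :=
  if_pos hi

/-- The flag obtained by forgetting the last entry. -/
noncomputable def truncate (C : FullFlag B (m + 1)) : FullFlag B m :=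
  ofChain C.space (C.isTotIso_space m) (fun _ hi => C.finrank_space (Nat.le_succ_of_le hi))
    fun _ hi => C.space_mono (Nat.le_succ _) (Nat.succ_le_succ hi.le)

theorem truncate_space (C : FullFlag B (m + 1)) {i : ℕ} (hi : i ≤ m) :
    C.truncate.space i = C.space i :=
  ofChain_space _ _ _ hi

theorem exists_truncate_eq_of_mem_coversIn (hA : IsAltForm B) {D : FullFlag B m}
    {X : Submodule F V} (hX : X ∈ coversIn (D.space m) (bperp B (D.space m))) :
    ∃ E : FullFlag B (m + 1), E.truncate = D ∧ E.space (m + 1) = X := by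
  have hspace {i : ℕ} (hi : i ≤ m) : Function.update D.space (m + 1) X i = D.space i :=
    Function.update_of_ne (by omega) _ _
  have hlast : Function.update D.space (m + 1) X (m + 1) = X := Function.update_self _ _ _
  refine ⟨ofChain (Function.update D.space (m + 1) X) ?_ (fun i hi => ?_) fun i hi => ?_, ?_, ?_⟩
  · rw [hlast]
    exact isTotIso_of_mem_coversIn hA (D.isTotIso_space m) hX
  · rcases hi.eq_or_lt with rfl | hi
    · rw [hlast, hX.2.2, D.finrank_space le_rfl]
    · rw [hspace (by omega), D.finrank_space (by omega)]
  · rcases (Nat.le_of_lt_succ hi).eq_or_lt with rfl | hi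
    · rw [hlast, hspace le_rfl]
      exact hX.1
    · rw [hspace hi.le, hspace hi]
      exact D.space_mono i.le_succ hi
  · refine ext_space fun i hi => ?_
    have hi := (Finset.mem_Icc.1 hi).2
    rw [truncate_space _ hi, ofChain_space _ _ _ (by omega), hspace hi]
  · exact (ofChain_space _ _ _ le_rfl).trans hlast

theorem bijOn_space_truncate_fiber (hA : IsAltForm B) (D : FullFlag B m) :
    Set.BijOn (fun E : FullFlag B (m + 1) => E.space (m + 1)) {E | E.truncate = D}
      (coversIn (D.space m) (bperp B (D.space m))) := by
  refine ⟨?_, ?_, ?_⟩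
  · rintro E rfl
    have hle := E.space_mono m.le_succ le_rfl
    rw [coversIn, E.truncate_space le_rfl]
    exact ⟨hle, (E.isTotIso_space (m + 1)).le_bperp hle, by
      rw [E.finrank_space le_rfl, E.finrank_space m.le_succ]⟩
  · intro E hE E' hE' h
    refine ext_space fun i hi => ?_
    rcases (Finset.mem_Icc.1 hi).2.eq_or_lt with rfl | him
    · exact h
    · have him := Nat.le_of_lt_succ him
      rw [← E.truncate_space him, ← E'.truncate_space him, hE.trans hE'.symm]
  · exact fun X hX => exists_truncate_eq_of_mem_coversIn hA hX

end SFlag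

end Flags

section Opposition

variable {F V : Type} [Field F] [AddCommGroup V] [Module F V] [FiniteDimensional F V]
  {B : V →ₗ[F] V →ₗ[F] F}

theorem disjoint_bperp_iff_notMem_bperp (hA : IsAltForm B) (hN : NondegForm B)
    {K H L X : Submodule F V} (hKH : K ≤ H) (hH : finrank F H = finrank F L + 1)
    (hdisj : Disjoint (bperp B K) L) (hX : X ∈ coversIn L (bperp B L)) {e : V} (he : e ≠ 0)
    (heH : e ∈ H) (heL : e ∈ bperp B L) : Disjoint (bperp B H) X ↔ e ∉ bperp B X := by
  obtain ⟨hLX, -, hX⟩ := hX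
  constructor
  · intro h heX
    exact he (Submodule.disjoint_def.1 (disjoint_bperp_symm hA hN (hH.trans hX.symm) h) e heX heH)
  · refine fun heX => Submodule.disjoint_def.2 fun x hxH hxX => by_contra fun hx => heX ?_
    have hxL : x ∉ L := fun h => hx (Submodule.disjoint_def.1 hdisj x (bperp_anti hKH hxH) h)
    rw [← Submodule.span_singleton_le_iff_mem, hA.le_bperp_comm,
      eq_sup_span_singleton hLX hX hxX hxL, sup_le_iff, hA.le_bperp_comm,
      Submodule.span_singleton_le_iff_mem, Submodule.span_singleton_le_iff_mem]
    exact ⟨heL, bperp_anti ((Submodule.span_singleton_le_iff_mem e H).2 heH) hxH⟩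

/- The condition says that `X` is not orthogonal to a fixed vector `e ≠ 0` of `H ⊓ L^⊥`. -/
theorem ncard_coversIn_bperp_disjoint [Finite F] (hA : IsAltForm B) (hN : NondegForm B)
    {K H L : Submodule F V} (hL : IsTotIso B L) (hH : IsTotIso B H) (hKH : K ≤ H)
    (hdim : finrank F H = finrank F L + 1) (hdisj : Disjoint (bperp B K) L) :
    {X ∈ coversIn L (bperp B L) | Disjoint (bperp B H) X}.ncard =
      Nat.card F ^ (finrank F V - (2 * finrank F L + 1)) := by
  have finrank_perp := finrank_bperp hA hN
  have hHV := H.finrank_le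
  obtain ⟨e, he, heH, heL⟩ := exists_ne_zero_mem_inf (X := H) (Y := bperp B L) (by
    rw [finrank_perp]
    omega)
  have heL' : e ∉ L := fun h => he (Submodule.disjoint_def.1 hdisj e (hH.le_bperp hKH heH) h)
  have le_iff {X : Submodule F V} (hX : X ≤ bperp B L) :
      X ≤ bperp B (L ⊔ Submodule.span F {e}) ↔ e ∈ bperp B X := by
    rw [hA.le_bperp_comm, sup_le_iff, Submodule.span_singleton_le_iff_mem]
    exact and_iff_right (hA.le_bperp_comm.1 hX)
  have hfinrank : finrank F (bperp B (L ⊔ Submodule.span F {e})) =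
      finrank F V - (finrank F L + 1) := by
    rw [finrank_perp, Submodule.finrank_sup_span_singleton heL']
  have heq : {X ∈ coversIn L (bperp B L) | Disjoint (bperp B H) X} =
      coversIn L (bperp B L) \ coversIn L (bperp B (L ⊔ Submodule.span F {e})) := by
    ext X
    refine and_congr_right fun hX => ?_
    rw [disjoint_bperp_iff_notMem_bperp hA hN hKH hdim hdisj hX he heH heL, ← le_iff hX.2.1]
    exact not_congr ⟨fun h => ⟨hX.1, h, hX.2.2⟩, fun h => h.2.1⟩
  rw [heq, ncard_coversIn_diff_coversIn ((le_iff (hL.le_bperp le_rfl)).2 heL)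
    (bperp_anti le_sup_left) (by rw [hfinrank, finrank_perp]; omega), hfinrank]
  congr 1
  omega

end Opposition

section Fibres

variable {α β : Type*}

theorem ncard_sep_comp_of_bijOn {f : α → β} {S : Set α} {T : Set β} (h : Set.BijOn f S T)
    (p : β → Prop) : {x ∈ S | p (f x)}.ncard = {y ∈ T | p y}.ncard :=
  Set.BijOn.ncard_eq (f := f) ⟨fun _ hx => ⟨h.mapsTo hx.1, hx.2⟩,
    h.injOn.mono fun _ hx => hx.1, by
      rintro y ⟨hy, hpy⟩
      obtain ⟨x, hx, rfl⟩ := h.surjOn hy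
      exact ⟨x, ⟨hx, hpy⟩, rfl⟩⟩

theorem ncard_eq_ncard_mul_of_ncard_fiber_eq [Finite α] [Finite β] {f : α → β} {S : Set α}
    {T : Set β} {c : ℕ} (hf : Set.MapsTo f S T) (hc : ∀ y ∈ T, {x ∈ S | f x = y}.ncard = c) :
    S.ncard = T.ncard * c := by
  have := Fintype.ofFinite α
  have := Fintype.ofFinite β
  rw [Set.ncard_eq_toFinset_card' S, Set.ncard_eq_toFinset_card' T,
    Finset.card_eq_sum_card_fiberwise (t := T.toFinset) (by simpa using hf)]
  refine Finset.sum_const_nat fun y hy => ?_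
  rw [← hc y (Set.mem_toFinset.1 hy), Set.ncard_eq_toFinset_card']
  congr 1
  ext x
  simp

end Fibres

section FlagCounting

variable {F V : Type} [Field F] [AddCommGroup V] [Module F V] {B : V →ₗ[F] V →ₗ[F] F} {m : ℕ}

theorem flagOpp_iff {C D : FullFlag B m} :
    FlagOpp C D ↔ ∀ i ≤ m, Disjoint (bperp B (C.space i)) (D.space i) := by
  refine ⟨fun h i hi => ?_, fun h i hi => (h i (Finset.mem_Icc.1 hi).2).eq_bot⟩
  rcases Nat.eq_zero_or_pos i with rfl | hpos
  · rw [D.space_zero]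
    exact disjoint_bot_right
  · exact disjoint_iff.2 (h i (Finset.mem_Icc.2 ⟨hpos, hi⟩))

variable [FiniteDimensional F V]

theorem FlagOpp.symm (hA : IsAltForm B) (hN : NondegForm B) {C D : FullFlag B m}
    (h : FlagOpp C D) : FlagOpp D C :=
  flagOpp_iff.2 fun i hi => disjoint_bperp_symm hA hN
    ((C.finrank_space hi).trans (D.finrank_space hi).symm) (flagOpp_iff.1 h i hi)

theorem flagOpp_succ_iff {C D : FullFlag B (m + 1)} :
    FlagOpp C D ↔
      FlagOpp C.truncate D.truncate ∧ Disjoint (bperp B (C.space (m + 1))) (D.space (m + 1)) := by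
  have forall_truncate_iff :
      (∀ i ≤ m, Disjoint (bperp B (C.truncate.space i)) (D.truncate.space i)) ↔
        ∀ i ≤ m, Disjoint (bperp B (C.space i)) (D.space i) :=
    forall₂_congr fun i hi => by rw [C.truncate_space hi, D.truncate_space hi]
  rw [flagOpp_iff, flagOpp_iff, forall_truncate_iff]
  refine ⟨fun h => ⟨fun i hi => h i (Nat.le_succ_of_le hi), h _ le_rfl⟩, fun h i hi => ?_⟩
  rcases hi.eq_or_lt with rfl | hi
  · exact h.2
  · exact h.1 i (Nat.le_of_lt_succ hi)

variable [Finite F]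

theorem natCard_fullFlag_succ (hA : IsAltForm B) (hN : NondegForm B) (m : ℕ) :
    Nat.card (FullFlag B (m + 1)) =
      Nat.card (FullFlag B m) * ∑ i ∈ Finset.range (finrank F V - 2 * m), Nat.card F ^ i := by
  have : Finite V := Module.finite_of_finite F
  rw [← Set.ncard_univ, ← Set.ncard_univ]
  refine ncard_eq_ncard_mul_of_ncard_fiber_eq (f := SFlag.truncate) (fun _ _ => trivial)
    fun D _ => ?_
  have hdim : finrank F (bperp B (D.space m)) - finrank F (D.space m) = finrank F V - 2 * m := by
    rw [finrank_bperp hA hN, D.finrank_space le_rfl]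
    omega
  simp only [Set.mem_univ, true_and]
  rw [(SFlag.bijOn_space_truncate_fiber hA D).ncard_eq,
    ncard_coversIn ((D.isTotIso_space m).le_bperp le_rfl), hdim]

theorem natCard_fullFlag_mul_le (hA : IsAltForm B) (hN : NondegForm B) {m : ℕ}
    (hm : 2 * m ≤ finrank F V) :
    Nat.card (FullFlag B m) * (Nat.card F - 1) ^ m ≤ Nat.card F ^ (m * (finrank F V + 1 - m)) := by
  induction m with
  | zero =>
    have : Subsingleton (FullFlag B 0) := ⟨fun C D => SFlag.ext_space (by simp)⟩
    simpa using Finite.card_le_one_iff_subsingleton.2 this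
  | succ m ih =>
    have geom := geom_sum_mul_of_one_le (Nat.succ_le_iff.2 (Nat.card_pos (α := F)))
      (finrank F V - 2 * m)
    calc Nat.card (FullFlag B (m + 1)) * (Nat.card F - 1) ^ (m + 1)
        = (Nat.card (FullFlag B m) * (Nat.card F - 1) ^ m) *
            (Nat.card F ^ (finrank F V - 2 * m) - 1) := by
          rw [natCard_fullFlag_succ hA hN, ← geom]
          ring
      _ ≤ Nat.card F ^ (m * (finrank F V + 1 - m)) * Nat.card F ^ (finrank F V - 2 * m) :=
          Nat.mul_le_mul (ih (by omega)) (Nat.sub_le _ _)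
      _ = Nat.card F ^ ((m + 1) * (finrank F V + 1 - (m + 1))) := by
          rw [← pow_add]
          congr 1
          zify [show m ≤ finrank F V + 1 by omega, show 2 * m ≤ finrank F V by omega,
            show m + 1 ≤ finrank F V + 1 by omega]
          ring

theorem ncard_flagOpp_sep_truncate_eq (hA : IsAltForm B) (hN : NondegForm B)
    {C : FullFlag B (m + 1)} {D : FullFlag B m} (hD : FlagOpp C.truncate D) :
    {E ∈ {E | FlagOpp C E} | E.truncate = D}.ncard = Nat.card F ^ (finrank F V - (2 * m + 1)) := by
  have hsep : {E ∈ {E | FlagOpp C E} | E.truncate = D} = {E ∈ {E | E.truncate = D} |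
      Disjoint (bperp B (C.space (m + 1))) (E.space (m + 1))} := by
    ext E
    simp only [Set.mem_ofPred_eq, flagOpp_succ_iff]
    grind
  have hdisj := flagOpp_iff.1 hD m le_rfl
  rw [C.truncate_space le_rfl] at hdisj
  rw [hsep, ncard_sep_comp_of_bijOn (SFlag.bijOn_space_truncate_fiber hA D)
    (Disjoint (bperp B (C.space (m + 1)))), ncard_coversIn_bperp_disjoint hA hN
    (D.isTotIso_space m) (C.isTotIso_space _) (C.space_mono m.le_succ le_rfl)
    (by rw [C.finrank_space le_rfl, D.finrank_space le_rfl]) hdisj, D.finrank_space le_rfl]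

theorem ncard_flagOpp (hA : IsAltForm B) (hN : NondegForm B) {m : ℕ}
    (hm : 2 * m ≤ finrank F V) (C : FullFlag B m) :
    {D | FlagOpp C D}.ncard = Nat.card F ^ (m * (finrank F V - m)) := by
  have : Finite V := Module.finite_of_finite F
  induction m with
  | zero =>
    have : {D | FlagOpp C D} = {C} := by
      ext D
      simp [flagOpp_iff, SFlag.space_zero, show D = C from SFlag.ext_space (by simp)]
    rw [this, Set.ncard_singleton, zero_mul, pow_zero]
  | succ m ih =>
    rw [ncard_eq_ncard_mul_of_ncard_fiber_eq (f := SFlag.truncate) (S := {D | FlagOpp C D})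
      (T := {D | FlagOpp C.truncate D}) (fun E hE => (flagOpp_succ_iff.1 hE).1)
      fun D hD => ncard_flagOpp_sep_truncate_eq hA hN hD, ih (by omega), ← pow_add]
    congr 1
    zify [show m ≤ finrank F V by omega, show 2 * m + 1 ≤ finrank F V by omega,
      show m + 1 ≤ finrank F V by omega]
    ring

end FlagCounting

section Panels

variable {F V : Type} [Field F] [AddCommGroup V] [Module F V] {B : V →ₗ[F] V →ₗ[F] F} {n s : ℕ}

/-- Two flags are in the same panel of type `s + 1` if they differ at most in the entry of
dimension `s + 1`. -/
def SamePanel (s : ℕ) (C D : FullFlag B n) : Prop :=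
  ∀ i, i ≠ s + 1 → C.space i = D.space i

theorem samePanel_equivalence (s : ℕ) : Equivalence (SamePanel (B := B) (n := n) s) :=
  ⟨fun _ _ _ => rfl, fun h i hi => (h i hi).symm, fun h h' i hi => (h i hi).trans (h' i hi)⟩

theorem samePanel_of_forall_le {C D : FullFlag B n}
    (h : ∀ i ≤ n, i ≠ s + 1 → C.space i = D.space i) : SamePanel s C D := by
  intro i his
  by_cases hi : i ≤ n
  · exact h i hi his
  · rw [C.eq_bot i (by simp [hi]), D.eq_bot i (by simp [hi])]

/-- The upper bound for the entry of dimension `s + 1` of the chambers in the panel of `C` of type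
`s + 1`: the next entry of `C` or, if there is none, the orthogonal complement of the previous
one. -/
noncomputable def SFlag.panelTop (C : FullFlag B n) (s : ℕ) : Submodule F V :=
  if s + 1 < n then C.space (s + 2) else bperp B (C.space s)

namespace SFlag

theorem panelTop_of_lt (C : FullFlag B n) (h : s + 1 < n) : C.panelTop s = C.space (s + 2) :=
  if_pos h

theorem panelTop_of_not_lt (C : FullFlag B n) (h : ¬ s + 1 < n) :
    C.panelTop s = bperp B (C.space s) :=
  if_neg h

theorem le_panelTop (C : FullFlag B n) (hs : s < n) : C.space (s + 1) ≤ C.panelTop s := by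
  by_cases h : s + 1 < n
  · rw [C.panelTop_of_lt h]
    exact C.space_mono (Nat.le_succ _) h
  · rw [C.panelTop_of_not_lt h]
    exact (C.isTotIso_space (s + 1)).le_bperp (C.space_mono s.le_succ hs)

theorem panelTop_le_bperp (C : FullFlag B n) : C.panelTop s ≤ bperp B (C.space s) := by
  by_cases h : s + 1 < n
  · rw [C.panelTop_of_lt h]
    exact (C.isTotIso_space (s + 2)).le_bperp (C.space_mono (by omega) h)
  · rw [C.panelTop_of_not_lt h]

end SFlag

/-- A symplectic space of dimension `2 * n`. -/
structure IsSymplectic (B : V →ₗ[F] V →ₗ[F] F) (n : ℕ) : Prop where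
  alt : IsAltForm B
  nondeg : NondegForm B
  finrank_eq : finrank F V = 2 * n

variable [FiniteDimensional F V]

theorem IsSymplectic.finrank_bperp (hB : IsSymplectic B n) (W : Submodule F V) :
    finrank F (bperp B W) = 2 * n - finrank F W := by
  rw [_root_.finrank_bperp hB.alt hB.nondeg, hB.finrank_eq]

namespace SFlag

theorem finrank_panelTop (hB : IsSymplectic B n) (C : FullFlag B n) (hs : s < n) :
    finrank F (C.panelTop s) = s + 2 := by
  by_cases h : s + 1 < n
  · rw [C.panelTop_of_lt h]
    exact C.finrank_space h
  · rw [C.panelTop_of_not_lt h, hB.finrank_bperp, C.finrank_space hs.le]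
    omega

theorem disjoint_bperp_panelTop (hB : IsSymplectic B n) {C D : FullFlag B n} (hs : s < n)
    (h : ∀ i ≤ n, i ≠ s + 1 → Disjoint (bperp B (D.space i)) (C.space i)) :
    Disjoint (bperp B (D.panelTop s)) (C.panelTop s) := by
  by_cases hsn : s + 1 < n
  · rw [C.panelTop_of_lt hsn, D.panelTop_of_lt hsn]
    exact h (s + 2) hsn (by omega)
  · rw [C.panelTop_of_not_lt hsn, D.panelTop_of_not_lt hsn, bperp_bperp hB.alt hB.nondeg]
    exact (disjoint_bperp_symm hB.alt hB.nondeg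
      ((D.finrank_space hs.le).trans (C.finrank_space hs.le).symm) (h s hs.le (by omega))).symm

theorem exists_samePanel_space_eq (hA : IsAltForm B) (C : FullFlag B n) (hs : s < n)
    {X : Submodule F V} (hX : X ∈ coversIn (C.space s) (C.panelTop s)) :
    ∃ D, SamePanel s C D ∧ D.space (s + 1) = X := by
  have hspace {i : ℕ} (hi : i ≠ s + 1) :
      Function.update C.space (s + 1) X i = C.space i := Function.update_of_ne hi _ _
  have hself : Function.update C.space (s + 1) X (s + 1) = X := Function.update_self _ _ _
  have hiso : IsTotIso B (Function.update C.space (s + 1) X n) := by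
    rcases eq_or_ne n (s + 1) with rfl | hn
    · rw [hself]
      exact isTotIso_of_mem_coversIn hA (C.isTotIso_space s)
        ⟨hX.1, hX.2.1.trans C.panelTop_le_bperp, hX.2.2⟩
    · rw [hspace hn]
      exact C.isTotIso_space n
  have hdim (i : ℕ) (hi : i ≤ n) : finrank F (Function.update C.space (s + 1) X i) = i := by
    rcases eq_or_ne i (s + 1) with rfl | his
    · rw [hself, hX.2.2, C.finrank_space hs.le]
    · rw [hspace his, C.finrank_space hi]
  have hmono (i : ℕ) (hi : i < n) : Function.update C.space (s + 1) X i ≤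
      Function.update C.space (s + 1) X (i + 1) := by
    rcases eq_or_ne i s with rfl | his
    · rw [hself, hspace (by omega)]
      exact hX.1
    rw [hspace (i := i + 1) (by omega)]
    rcases eq_or_ne i (s + 1) with rfl | his'
    · rw [hself, ← C.panelTop_of_lt hi]
      exact hX.2.1
    · rw [hspace his']
      exact C.space_mono i.le_succ hi
  refine ⟨ofChain _ hiso hdim hmono, samePanel_of_forall_le fun i hi his => ?_,
    (ofChain_space _ _ _ hs).trans hself⟩
  rw [ofChain_space _ _ _ hi, hspace his]

theorem bijOn_space_panel (hA : IsAltForm B) (C : FullFlag B n) (hs : s < n) :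
    Set.BijOn (fun D : FullFlag B n => D.space (s + 1)) {D | SamePanel s C D}
      (coversIn (C.space s) (C.panelTop s)) := by
  refine ⟨fun D hD => ?_, fun D hD D' hD' h => ?_, fun X hX => C.exists_samePanel_space_eq hA hs hX⟩
  · have htop : C.panelTop s = D.panelTop s := by
      rw [panelTop, panelTop, hD (s + 2) (by omega), hD s (by omega)]
    rw [htop, hD s (by omega)]
    exact ⟨D.space_mono s.le_succ hs, D.le_panelTop hs, by
      rw [D.finrank_space hs, D.finrank_space hs.le]⟩
  · refine ext_space fun i _ => ?_
    rcases eq_or_ne i (s + 1) with rfl | hi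
    · exact h
    · exact (hD i hi).symm.trans (hD' i hi)

variable [Finite F]

theorem ncard_samePanel (hB : IsSymplectic B n) (C : FullFlag B n) (hs : s < n) :
    {D | SamePanel s C D}.ncard = Nat.card F + 1 := by
  rw [(C.bijOn_space_panel hB.alt hs).ncard_eq, ncard_coversIn_of_finrank_eq_add_two
    ((C.space_mono s.le_succ hs).trans (C.le_panelTop hs))
    (by rw [C.finrank_panelTop hB hs, C.finrank_space hs.le])]

/- In a panel that meets the chambers opposite to `D`, exactly one chamber is not opposite
to `D`: the projection of `D`. -/
theorem ncard_flagOpp_samePanel (hB : IsSymplectic B n) (C D : FullFlag B n) (hs : s < n) :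
    {E | FlagOpp D E ∧ SamePanel s E C}.ncard =
      if ∀ i ≤ n, i ≠ s + 1 → Disjoint (bperp B (D.space i)) (C.space i) then Nat.card F
      else 0 := by
  have : Finite V := Module.finite_of_finite F
  split_ifs with h
  · have hpanel : {E | FlagOpp D E ∧ SamePanel s E C} = {E ∈ {E | SamePanel s C E} |
        Disjoint (bperp B (D.space (s + 1))) (E.space (s + 1))} := by
      ext E
      refine ⟨fun ⟨hDE, hE⟩ => ⟨(samePanel_equivalence s).symm hE, flagOpp_iff.1 hDE _ hs⟩,
        fun ⟨hE, hDE⟩ => ⟨flagOpp_iff.2 fun i hi => ?_, (samePanel_equivalence s).symm hE⟩⟩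
      rcases eq_or_ne i (s + 1) with rfl | his
      · exact hDE
      · exact hE i his ▸ h i hi his
    rw [hpanel, ncard_sep_comp_of_bijOn (C.bijOn_space_panel hB.alt hs)
      (Disjoint (bperp B (D.space (s + 1))))]
    refine ncard_coversIn_disjoint ((C.space_mono s.le_succ hs).trans (C.le_panelTop hs))
      (bperp_anti (D.le_panelTop hs)) ?_ ?_ (disjoint_bperp_panelTop hB hs h)
      ((h s hs.le (by omega)).mono_left (bperp_anti (D.space_mono s.le_succ hs))) ?_ <;>
    simp only [hB.finrank_bperp, finrank_panelTop hB _ hs, C.finrank_space hs.le,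
      D.finrank_space hs, hB.finrank_eq] <;>
    omega
  · rw [Set.ncard_eq_zero]
    refine Set.eq_empty_of_forall_notMem fun E hE => h fun i hi his => ?_
    rw [← hE.2 i his]
    exact flagOpp_iff.1 hE.1 i hi

end SFlag

end Panels

section PanelMatrices

open Matrix

variable {F V : Type} [Field F] [AddCommGroup V] [Module F V] {n : ℕ}

/-- The adjacency matrix of distinct chambers in a common panel of type `s + 1`. -/
noncomputable def panelMatrix (B : V →ₗ[F] V →ₗ[F] F) (n : ℕ) (s : Fin n) :
    Matrix (FullFlag B n) (FullFlag B n) ℝ :=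
  relMatrix fun C D => C ≠ D ∧ SamePanel s C D

/-- The adjacency matrix of the relation of being opposite. -/
noncomputable def oppMatrix (B : V →ₗ[F] V →ₗ[F] F) (n : ℕ) :
    Matrix (FullFlag B n) (FullFlag B n) ℝ :=
  relMatrix FlagOpp

variable {B : V →ₗ[F] V →ₗ[F] F}

theorem oppMatrix_isSymm [FiniteDimensional F V] (hB : IsSymplectic B n) :
    (oppMatrix B n).IsSymm :=
  relMatrix_isSymm fun _ _ h => h.symm hB.alt hB.nondeg

theorem panelMatrix_nonneg (s : Fin n) (C D : FullFlag B n) : 0 ≤ panelMatrix B n s C D := by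
  rw [panelMatrix, relMatrix_apply]
  positivity

variable [Finite F] [Finite V]

theorem isHeckeQuadratic_panelMatrix (hB : IsSymplectic B n) (s : Fin n) :
    IsHeckeQuadratic (Nat.card F : ℝ) (panelMatrix B n s) :=
  isHeckeQuadratic_relMatrix_ne_and (samePanel_equivalence s) fun C => C.ncard_samePanel hB s.2

theorem panelMatrix_mulVec_one (hB : IsSymplectic B n) (s : Fin n) :
    panelMatrix B n s *ᵥ 1 = (Nat.card F : ℝ) • 1 :=
  relMatrix_ne_and_mulVec_one (samePanel_equivalence (s : ℕ)).refl
    fun C => C.ncard_samePanel hB s.2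

theorem oppMatrix_mulVec_one (hB : IsSymplectic B n) :
    oppMatrix B n *ᵥ 1 = (Nat.card F : ℝ) ^ (n * n) • 1 := by
  ext C
  rw [oppMatrix, relMatrix_mulVec_one, ncard_flagOpp hB.alt hB.nondeg hB.finrank_eq.ge,
    hB.finrank_eq, two_mul, Nat.add_sub_cancel]
  simp

theorem commute_oppMatrix_panelMatrix (hB : IsSymplectic B n) (s : Fin n) :
    Commute (oppMatrix B n) (panelMatrix B n s) := by
  have same_symm : (relMatrix (SamePanel (B := B) (n := n) s)).IsSymm :=
    relMatrix_isSymm fun _ _ h => (samePanel_equivalence (s : ℕ)).symm h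
  have mul_symm : (oppMatrix B n * relMatrix (SamePanel s)).IsSymm := by
    ext C D
    rw [transpose_apply, oppMatrix, relMatrix_mul_relMatrix_apply, relMatrix_mul_relMatrix_apply,
      SFlag.ncard_flagOpp_samePanel hB D C s.2, SFlag.ncard_flagOpp_samePanel hB C D s.2]
    refine congrArg _ (if_congr (forall₃_congr fun i hi _ => ?_) rfl rfl)
    have hdim := (C.finrank_space hi).trans (D.finrank_space hi).symm
    exact ⟨disjoint_bperp_symm hB.alt hB.nondeg hdim.symm,
      disjoint_bperp_symm hB.alt hB.nondeg hdim⟩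
  rw [panelMatrix, relMatrix_ne_and_eq_sub_one (samePanel_equivalence (s : ℕ)).refl]
  refine Commute.sub_right ?_ (Commute.one_right _)
  rw [Commute, SemiconjBy, ← mul_symm.eq, transpose_mul, same_symm.eq,
    (oppMatrix_isSymm hB).eq]

end PanelMatrices

section Galleries

variable {F V : Type} [Field F] [AddCommGroup V] [Module F V] {B : V →ₗ[F] V →ₗ[F] F} {n : ℕ}
  {g : ℕ → V}

/-- The span of the `i` consecutive terms of the sequence `g` that start at index `a`. -/
def window (F : Type) [Field F] [Module F V] (g : ℕ → V) (a i : ℕ) : Submodule F V :=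
  Submodule.span F (g '' Set.Ico a (a + i))

theorem window_mono {a b i j : ℕ} (hba : b ≤ a) (hij : a + i ≤ b + j) :
    window F g a i ≤ window F g b j :=
  Submodule.span_mono (Set.image_mono (Set.Ico_subset_Ico hba hij))

theorem window_succ (a i : ℕ) :
    window F g a (i + 1) = window F g (a + 1) i ⊔ Submodule.span F {g a} := by
  have hIco : Set.Ico a (a + (i + 1)) = insert a (Set.Ico (a + 1) (a + 1 + i)) := by
    ext x
    simp only [Set.mem_insert_iff, Set.mem_Ico]
    omega
  rw [window, window, ← Submodule.span_union, Set.union_singleton, ← Set.image_insert_eq, hIco]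

/-- A sequence running through a hyperbolic basis periodically: its terms at distance less than `n`
are orthogonal, those at distance `n` are not. -/
structure IsHyperbolicSequence (B : V →ₗ[F] V →ₗ[F] F) (n : ℕ) (g : ℕ → V) : Prop where
  apply_eq_zero : ∀ {x y}, x < y + n → y < x + n → B (g x) (g y) = 0
  apply_add_ne_zero : ∀ x, B (g x) (g (x + n)) ≠ 0

namespace IsHyperbolicSequence

theorem isTotIso_window (hg : IsHyperbolicSequence B n g) (a : ℕ) {i : ℕ} (hi : i ≤ n) :
    IsTotIso B (window F g a i) := by
  refine isTotIso_span ?_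
  rintro _ ⟨x, ⟨hax, hxi⟩, rfl⟩ _ ⟨y, ⟨hay, hyi⟩, rfl⟩
  exact hg.apply_eq_zero (by omega) (by omega)

theorem notMem_window_succ (hg : IsHyperbolicSequence B n g) (a : ℕ) {i : ℕ} (hi : i ≤ n) :
    g a ∉ window F g (a + 1) i := by
  have hker : window F g (a + 1) i ≤ LinearMap.ker (B.flip (g (a + n))) := by
    rw [window, Submodule.span_le]
    rintro _ ⟨x, ⟨hax, hxi⟩, rfl⟩
    exact hg.apply_eq_zero (by omega) (by omega)
  exact fun h => hg.apply_add_ne_zero a (hker h)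

variable [FiniteDimensional F V]

theorem finrank_window (hg : IsHyperbolicSequence B n g) (a : ℕ) {i : ℕ} (hi : i ≤ n) :
    finrank F (window F g a i) = i := by
  induction i generalizing a with
  | zero => rw [window, add_zero, Set.Ico_self, Set.image_empty, Submodule.span_empty, finrank_bot]
  | succ i ih =>
    rw [window_succ, Submodule.finrank_sup_span_singleton
      (hg.notMem_window_succ a (Nat.le_of_succ_le hi)), ih (a + 1) (Nat.le_of_succ_le hi)]

/-- The chamber of windows whose entries of dimension at most `j` start at index `k + 1`, while the
other ones start at index `k`. -/
noncomputable def chamber (hg : IsHyperbolicSequence B n g) (k j : ℕ) : FullFlag B n :=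
  SFlag.ofChain (fun i => window F g (if i ≤ j then k + 1 else k) i)
    (hg.isTotIso_window _ le_rfl) (fun _ hi => hg.finrank_window _ hi)
    fun i _ => window_mono (by split_ifs <;> omega) (by split_ifs <;> omega)

theorem chamber_space (hg : IsHyperbolicSequence B n g) (k j : ℕ) {i : ℕ} (hi : i ≤ n) :
    (hg.chamber k j).space i = window F g (if i ≤ j then k + 1 else k) i :=
  SFlag.ofChain_space _ _ _ hi

theorem chamber_zero_space (hg : IsHyperbolicSequence B n g) (k : ℕ) {i : ℕ}
    (hi : i ∈ Finset.Icc 1 n) : (hg.chamber k 0).space i = window F g k i := by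
  rw [Finset.mem_Icc] at hi
  rw [hg.chamber_space k 0 hi.2, if_neg (by omega)]

theorem chamber_last (hg : IsHyperbolicSequence B n g) (k : ℕ) :
    hg.chamber k n = hg.chamber (k + 1) 0 :=
  SFlag.ext_space fun i hi => by
    rw [hg.chamber_zero_space _ hi, hg.chamber_space k n (Finset.mem_Icc.1 hi).2,
      if_pos (Finset.mem_Icc.1 hi).2]

theorem samePanel_chamber_succ (hg : IsHyperbolicSequence B n g) (k j : ℕ) :
    SamePanel j (hg.chamber k j) (hg.chamber k (j + 1)) :=
  samePanel_of_forall_le fun i hi hij => by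
    rw [hg.chamber_space k j hi, hg.chamber_space k (j + 1) hi]
    congr 1
    split_ifs <;> omega

theorem chamber_ne_chamber_succ (hg : IsHyperbolicSequence B n g) (k : ℕ) {j : ℕ} (hj : j < n) :
    hg.chamber k j ≠ hg.chamber k (j + 1) := by
  intro h
  have hwindow : window F g k (j + 1) = window F g (k + 1) (j + 1) := by
    have := congrArg (fun C => SFlag.space C (j + 1)) h
    simpa [hg.chamber_space k _ (Nat.succ_le_of_lt hj)] using this
  refine hg.notMem_window_succ k (Nat.succ_le_of_lt hj) (hwindow ▸ ?_)
  exact Submodule.subset_span ⟨k, ⟨le_rfl, by omega⟩, rfl⟩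

theorem one_le_panelMatrix_apply (hg : IsHyperbolicSequence B n g) (k : ℕ) (j : Fin n) :
    1 ≤ panelMatrix B n j (hg.chamber k j) (hg.chamber k (j + 1)) := by
  rw [panelMatrix, relMatrix_apply,
    if_pos ⟨hg.chamber_ne_chamber_succ k j.2, hg.samePanel_chamber_succ k j⟩]

end IsHyperbolicSequence

theorem list_prod_pow_panelMatrix_nonneg [Finite V] (k : ℕ) (C D : FullFlag B n) :
    0 ≤ ((List.ofFn (panelMatrix B n)).prod ^ k) C D := by
  rw [← List.prod_replicate]
  refine list_prod_apply_nonneg (fun M hM => ?_) C D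
  rw [List.eq_of_mem_replicate hM]
  exact list_prod_apply_nonneg (List.forall_mem_ofFn_iff.2 panelMatrix_nonneg)

theorem IsHyperbolicSequence.one_le_list_prod_pow_apply [Finite V]
    (hg : IsHyperbolicSequence B n g) (k : ℕ) :
    1 ≤ ((List.ofFn (panelMatrix B n)).prod ^ k) (hg.chamber 0 0) (hg.chamber k 0) := by
  have one_le_prod (k : ℕ) :
      1 ≤ (List.ofFn (panelMatrix B n)).prod (hg.chamber k 0) (hg.chamber (k + 1) 0) :=
    hg.chamber_last k ▸
      one_le_prod_ofFn_apply panelMatrix_nonneg (w := hg.chamber k) (hg.one_le_panelMatrix_apply k)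
  rw [← List.prod_replicate, ← List.ofFn_const]
  exact one_le_prod_ofFn_apply
    (fun _ => list_prod_apply_nonneg (List.forall_mem_ofFn_iff.2 panelMatrix_nonneg))
    (w := fun k => hg.chamber k 0) fun k => one_le_prod k

end Galleries

section AlternatingSequence

/-- The sequence `e 0, …, e (n - 1), f 0, …, f (n - 1), e 0, …` of period `2 * n`. -/
def alternatingSequence {X : Type*} (n : ℕ) (e f : ℕ → X) (x : ℕ) : X :=
  if Even (x / n) then e (x % n) else f (x % n)

variable {X : Type*} {n : ℕ} {e f : ℕ → X}

theorem alternatingSequence_of_lt {x : ℕ} (hx : x < n) :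
    alternatingSequence n e f x = e x := by
  rw [alternatingSequence, Nat.div_eq_of_lt hx, if_pos Even.zero, Nat.mod_eq_of_lt hx]

theorem alternatingSequence_add (hn : 0 < n) (x : ℕ) :
    alternatingSequence n e f (n + x) = alternatingSequence n f e x := by
  by_cases h : Even (x / n) <;>
    simp [alternatingSequence, Nat.add_div_left x hn, Nat.even_add_one, h]

end AlternatingSequence

section Coxeter

open Matrix

variable {F V : Type} [Field F] [AddCommGroup V] [Module F V] {B : V →ₗ[F] V →ₗ[F] F} {n : ℕ}

theorem exists_ne_zero_mem_inf_bperp [FiniteDimensional F V] (hB : IsSymplectic B n)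
    (C D : FullFlag B n) {i : ℕ} (hi : i < n) :
    ∃ x ≠ 0, x ∈ C.space (i + 1) ∧ x ∈ bperp B (D.space i) :=
  exists_ne_zero_mem_inf (by
    rw [hB.finrank_bperp, hB.finrank_eq, C.finrank_space hi, D.finrank_space hi.le]
    omega)

/-- Vectors `e i`, `f i` for `i < n` that form a hyperbolic basis of `V` adapted to the opposite
chambers `C` and `D`. -/
structure IsAdapted (C D : FullFlag B n) (e f : ℕ → V) : Prop where
  left_mem : ∀ {i}, i < n → e i ∈ C.space (i + 1)
  right_mem : ∀ {i}, i < n → f i ∈ D.space (i + 1)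
  apply_eq_zero : ∀ {i j}, i < n → j < n → i ≠ j → B (e i) (f j) = 0
  apply_ne_zero : ∀ {i}, i < n → B (e i) (f i) ≠ 0

theorem FlagOpp.exists_isAdapted [FiniteDimensional F V] (hB : IsSymplectic B n)
    {C D : FullFlag B n} (h : FlagOpp C D) : ∃ e f, IsAdapted C D e f := by
  have hCD := flagOpp_iff.1 h
  have hDC := flagOpp_iff.1 (h.symm hB.alt hB.nondeg)
  choose! e he heC heD using fun i (hi : i < n) => exists_ne_zero_mem_inf_bperp hB C D hi
  choose! f hf hfD hfC using fun i (hi : i < n) => exists_ne_zero_mem_inf_bperp hB D C hi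
  refine ⟨e, f, heC _, hfD _, fun {i j} hi hj hij => ?_, fun {i} hi hef => ?_⟩
  · rcases hij.lt_or_gt with hij | hij
    · exact mem_bperp.1 (hfC j hj) _ (C.space_mono hij hj.le (heC i hi))
    · exact hB.alt.eq_zero_symm (mem_bperp.1 (heD i hi) _ (D.space_mono hij hi.le (hfD j hj)))
  · have heC' : e i ∉ C.space i := fun hmem =>
      he i hi (Submodule.disjoint_def.1 (hDC i hi.le) _ (heD i hi) hmem)
    have hCe := eq_sup_span_singleton (C.space_mono i.le_succ hi)
      (by rw [C.finrank_space hi, C.finrank_space hi.le]) (heC i hi) heC'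
    refine hf i hi (Submodule.disjoint_def.1 (hCD (i + 1) hi) _ ?_ (hfD i hi))
    rw [← Submodule.span_singleton_le_iff_mem, hB.alt.le_bperp_comm, hCe, sup_le_iff,
      hB.alt.le_bperp_comm, Submodule.span_singleton_le_iff_mem,
      Submodule.span_singleton_le_iff_mem]
    refine ⟨hfC i hi, mem_bperp.2 fun w hw => ?_⟩
    obtain ⟨c, rfl⟩ := Submodule.mem_span_singleton.1 hw
    rw [map_smul, LinearMap.smul_apply, hB.alt.eq_zero_symm hef, smul_zero]

theorem IsAdapted.isHyperbolicSequence (hB : IsSymplectic B n) (hn : 0 < n) {C D : FullFlag B n}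
    {e f : ℕ → V} (h : IsAdapted C D e f) :
    IsHyperbolicSequence B n (alternatingSequence n e f) := by
  have he (x : ℕ) : e (x % n) ∈ C.space n :=
    C.space_mono (Nat.mod_lt x hn) le_rfl (h.left_mem (Nat.mod_lt x hn))
  have hf (x : ℕ) : f (x % n) ∈ D.space n :=
    D.space_mono (Nat.mod_lt x hn) le_rfl (h.right_mem (Nat.mod_lt x hn))
  refine ⟨fun {x y} hxy hyx => ?_, fun x => ?_⟩
  · rcases eq_or_ne (x % n) (y % n) with hmod | hmod
    · obtain rfl : x = y := Nat.ModEq.eq_of_abs_lt hmod (abs_lt.2 ⟨by omega, by omega⟩)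
      exact hB.alt _
    · rw [alternatingSequence, alternatingSequence]
      split_ifs
      · exact C.isTotIso_space n _ (he x) _ (he y)
      · exact h.apply_eq_zero (Nat.mod_lt x hn) (Nat.mod_lt y hn) hmod
      · exact hB.alt.eq_zero_symm (h.apply_eq_zero (Nat.mod_lt y hn) (Nat.mod_lt x hn) hmod.symm)
      · exact D.isTotIso_space n _ (hf x) _ (hf y)
  · have hef := h.apply_ne_zero (Nat.mod_lt x hn)
    rw [add_comm x n, alternatingSequence_add hn, alternatingSequence, alternatingSequence]
    split_ifs
    · exact hef
    · exact fun hfe => hef (hB.alt.eq_zero_symm hfe)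

theorem IsAdapted.window_zero_eq [FiniteDimensional F V] (hB : IsSymplectic B n) (hn : 0 < n)
    {C D : FullFlag B n} {e f : ℕ → V} (h : IsAdapted C D e f) {i : ℕ} (hi : i ≤ n) :
    window F (alternatingSequence n e f) 0 i = C.space i := by
  refine Submodule.eq_of_le_of_finrank_eq (Submodule.span_le.2 ?_) ?_
  · rintro _ ⟨x, ⟨-, hx⟩, rfl⟩
    rw [zero_add] at hx
    rw [alternatingSequence_of_lt (hx.trans_le hi)]
    exact C.space_mono hx hi (h.left_mem (hx.trans_le hi))
  · rw [(h.isHyperbolicSequence hB hn).finrank_window 0 hi, C.finrank_space hi]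

theorem IsAdapted.window_eq [FiniteDimensional F V] (hB : IsSymplectic B n) (hn : 0 < n)
    {C D : FullFlag B n} {e f : ℕ → V} (h : IsAdapted C D e f) {i : ℕ} (hi : i ≤ n) :
    window F (alternatingSequence n e f) n i = D.space i := by
  refine Submodule.eq_of_le_of_finrank_eq (Submodule.span_le.2 ?_) ?_
  · rintro _ ⟨_, ⟨hx, hxi⟩, rfl⟩
    obtain ⟨x, rfl⟩ := Nat.exists_eq_add_of_le hx
    rw [Nat.add_lt_add_iff_left] at hxi
    rw [alternatingSequence_add hn, alternatingSequence_of_lt (hxi.trans_le hi)]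
    exact D.space_mono hxi hi (h.right_mem (hxi.trans_le hi))
  · rw [(h.isHyperbolicSequence hB hn).finrank_window n hi, D.finrank_space hi]

theorem FlagOpp.one_le_list_prod_pow_apply [Finite V] (hB : IsSymplectic B n) (hn : 0 < n)
    {C D : FullFlag B n} (h : FlagOpp C D) :
    1 ≤ ((List.ofFn (panelMatrix B n)).prod ^ n) C D := by
  obtain ⟨e, f, hef⟩ := h.exists_isAdapted hB
  have hg := hef.isHyperbolicSequence hB hn
  have hC : hg.chamber 0 0 = C := SFlag.ext_space fun i hi => by
    rw [hg.chamber_zero_space 0 hi, hef.window_zero_eq hB hn (Finset.mem_Icc.1 hi).2]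
  have hD : hg.chamber n 0 = D := SFlag.ext_space fun i hi => by
    rw [hg.chamber_zero_space n hi, hef.window_eq hB hn (Finset.mem_Icc.1 hi).2]
  exact hC ▸ hD ▸ hg.one_le_list_prod_pow_apply n

/- The longest element of the Weyl group of type `C_n` is the `n`-th power of a Coxeter element;
both matrices have row sums `q ^ (n * n)`, so an entrywise inequality suffices. -/
theorem oppMatrix_eq_list_prod_pow [Finite F] [Finite V] (hB : IsSymplectic B n) (hn : 0 < n) :
    oppMatrix B n = (List.ofFn (panelMatrix B n)).prod ^ n := by
  refine eq_of_apply_le_of_mulVec_one_eq (fun C D => ?_) ?_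
  · rw [oppMatrix, relMatrix_apply]
    split_ifs with h
    · exact h.one_le_list_prod_pow_apply hB hn
    · exact list_prod_pow_panelMatrix_nonneg n C D
  · rw [oppMatrix_mulVec_one hB,
      prod_ofFn_pow_mulVec_eq_smul n (panelMatrix_mulVec_one hB)]

end Coxeter

section HeavySpaces

variable {F V : Type} [Field F] [AddCommGroup V] [Module F V] {B : V →ₗ[F] V →ₗ[F] F}

/- If no entry of `C` is heavy, pick for each `s` a flag `D s ∉ 𝓕` sharing the entry `C.space s`.
So many members of `𝓕` are opposite to each `D s` that one of them is opposite to all `D s`, hence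
to `C`. -/
theorem exists_heavy_of_card_mul_ncard_lt [Finite V] {J : Finset ℕ} {𝓕 : Set (SFlag B J)} {μ : ℕ}
    (hEKR : IsEKRFlags 𝓕) (hopp : ∀ D ∉ 𝓕, μ ≤ {E ∈ 𝓕 | FlagOpp D E}.ncard)
    (hcard : J.card * 𝓕.ncard < 𝓕.ncard + J.card * μ) {C : SFlag B J} (hC : C ∈ 𝓕) :
    ∃ s ∈ J, Heavy 𝓕 s (C.space s) := by
  by_contra! hlight
  simp only [Heavy, not_forall] at hlight
  have : Nonempty (SFlag B J) := ⟨C⟩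
  choose! D hDC hD using hlight
  have ncard_not_opp_add_le (s : ℕ) (hs : s ∈ J) :
      {E ∈ 𝓕 | ¬ FlagOpp (D s) E}.ncard + μ ≤ 𝓕.ncard := by
    have hsplit := Set.ncard_inter_add_ncard_sdiff_eq_ncard 𝓕 {E | FlagOpp (D s) E}
    have hμ := hopp (D s) (hD s hs)
    exact hsplit ▸ (add_comm _ _).trans_le (Nat.add_le_add_right hμ _)
  have hunion : (⋃ s ∈ J, {E ∈ 𝓕 | ¬ FlagOpp (D s) E}).ncard < 𝓕.ncard := by
    have hsum := Finset.sum_le_sum ncard_not_opp_add_le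
    rw [Finset.sum_add_distrib, Finset.sum_const, Finset.sum_const, smul_eq_mul, smul_eq_mul]
      at hsum
    have := Finset.set_ncard_biUnion_le J fun s => {E ∈ 𝓕 | ¬ FlagOpp (D s) E}
    omega
  obtain ⟨E, hE, hEunion⟩ := Set.exists_mem_notMem_of_ncard_lt_ncard hunion
  refine hEKR C hC E hE fun s hs => ?_
  have hDE : FlagOpp (D s) E := by
    by_contra h
    exact hEunion (Set.mem_biUnion hs ⟨hE, h⟩)
  exact hDC s hs ▸ hDE s hs

end HeavySpaces

section Numerics

theorem sub_one_mul_pow_le {n : ℕ} {q : ℝ} (hq : (n : ℝ) ^ 2 ≤ q) :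
    (n - 1) * q ^ n ≤ n * (q - 1) ^ n := by
  rcases n.eq_zero_or_pos with rfl | hn
  · simp
  have hn1 : (1 : ℝ) ≤ n := Nat.one_le_cast.2 hn
  have hq1 : 1 ≤ q := by nlinarith
  have hq0 : q ≠ 0 := by positivity
  have hinv : q⁻¹ ≤ 1 := inv_le_one_of_one_le₀ hq1
  have bernoulli : 1 + n * -q⁻¹ ≤ (1 + -q⁻¹) ^ n := one_add_mul_le_pow (by linarith) n
  have hsq : (n : ℝ) ^ 2 * q⁻¹ ≤ 1 := (mul_inv_le_iff₀ (by positivity)).2 (by linarith)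
  calc (n - 1) * q ^ n ≤ n * (1 + -q⁻¹) ^ n * q ^ n := by
        gcongr
        nlinarith
    _ = n * (q - 1) ^ n := by
        rw [mul_assoc, ← mul_pow]
        congr 2
        field_simp
        ring

theorem mul_lt_add_mul_of_mul_pow_le {n : ℕ} {q a : ℝ} (hn : 0 < n) (hq : (n : ℝ) ^ 2 ≤ q)
    (ha : 0 ≤ a) (h : a * (q ^ n + 1) * (q - 1) ^ n ≤ q ^ (n * (n + 1))) :
    n * a < a + n * q ^ ((n - 1) * n) := by
  have hq0 : 0 < q := lt_of_lt_of_le (by positivity) hq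
  have hpow : q ^ (n * (n + 1)) = q ^ ((n - 1) * n) * q ^ n * q ^ n := by
    obtain ⟨m, rfl⟩ := Nat.exists_eq_add_of_le' hn
    rw [← pow_add, ← pow_add, Nat.add_sub_cancel]
    ring_nf
  have key : (n - 1) * a * (q ^ n * (q ^ n + 1)) <
      n * q ^ ((n - 1) * n) * (q ^ n * (q ^ n + 1)) :=
    calc (n - 1) * a * (q ^ n * (q ^ n + 1)) = (n - 1) * q ^ n * (a * (q ^ n + 1)) := by ring
      _ ≤ n * (q - 1) ^ n * (a * (q ^ n + 1)) := by
          gcongr ?_ * _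
          exact sub_one_mul_pow_le hq
      _ = n * (a * (q ^ n + 1) * (q - 1) ^ n) := by ring
      _ ≤ n * q ^ (n * (n + 1)) := by gcongr
      _ = n * q ^ ((n - 1) * n) * (q ^ n * q ^ n) := by rw [hpow]; ring
      _ < n * q ^ ((n - 1) * n) * (q ^ n * (q ^ n + 1)) := by
          gcongr
          exact lt_add_one _
  linarith [lt_of_mul_lt_mul_right key (by positivity)]

end Numerics

section SharpSets

open Matrix

variable {F V : Type} [Field F] [AddCommGroup V] [Module F V] {B : V →ₗ[F] V →ₗ[F] F} {n : ℕ}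
  {𝓕 : Set (FullFlag B n)}

theorem IsEKRFlags.dotProduct_oppMatrix_mulVec [Finite V] (hEKR : IsEKRFlags 𝓕) :
    𝓕.indicator 1 ⬝ᵥ oppMatrix B n *ᵥ 𝓕.indicator 1 = 0 := by
  refine Finset.sum_eq_zero fun C _ => ?_
  by_cases hC : C ∈ 𝓕
  · have : {E ∈ 𝓕 | FlagOpp C E} = ∅ := Set.eq_empty_of_forall_notMem fun E hE =>
      hEKR C hC E hE.1 hE.2
    rw [oppMatrix, relMatrix_mulVec_indicator_one, this, Set.ncard_empty, Nat.cast_zero, mul_zero]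
  · rw [Set.indicator_of_notMem hC, zero_mul]

variable [Finite F]

theorem posSemidef_oppMatrix_add_smul_one [Finite V] (hB : IsSymplectic B n) (hn : 0 < n) :
    (oppMatrix B n + (Nat.card F : ℝ) ^ ((n - 1) * n) • 1).PosSemidef := by
  have hopp := oppMatrix_eq_list_prod_pow hB hn
  rw [hopp]
  exact posSemidef_prod_ofFn_pow_add_smul_one (Nat.one_le_cast.2 Nat.card_pos)
    (isHeckeQuadratic_panelMatrix hB) (hopp ▸ commute_oppMatrix_panelMatrix hB)
    (hopp ▸ oppMatrix_isSymm hB)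

theorem ncard_flagOpp_of_sharp (hB : IsSymplectic B n) (hn : 0 < n) (hEKR : IsEKRFlags 𝓕)
    (hsharp : (𝓕.ncard : ℝ) * ((Nat.card F : ℝ) ^ n + 1) = Nat.card (FullFlag B n))
    {D : FullFlag B n} (hD : D ∉ 𝓕) :
    {E ∈ 𝓕 | FlagOpp D E}.ncard = Nat.card F ^ ((n - 1) * n) := by
  have : FiniteDimensional F V := .of_finrank_pos (by rw [hB.finrank_eq]; omega)
  have : Finite V := Module.finite_of_finite F
  have hpow : (Nat.card F : ℝ) ^ (n * n) =
      (Nat.card F : ℝ) ^ ((n - 1) * n) * (Nat.card F : ℝ) ^ n := by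
    rw [← pow_add, ← Nat.succ_mul, Nat.succ_eq_add_one, Nat.sub_add_cancel hn]
  have hf1 : 𝓕.indicator 1 ⬝ᵥ 1 = (𝓕.ncard : ℝ) := by
    simp [dotProduct, Set.indicator_apply, Set.ncard_eq_toFinset_card', Finset.sum_boole]
  have hff : 𝓕.indicator 1 ⬝ᵥ 𝓕.indicator 1 = 𝓕.indicator (1 : FullFlag B n → ℝ) ⬝ᵥ 1 :=
    Finset.sum_congr rfl fun E _ => by by_cases hE : E ∈ 𝓕 <;> simp [hE]
  have h := congrFun (mulVec_eq_of_posSemidef_add_smul_one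
    (posSemidef_oppMatrix_add_smul_one hB hn) (oppMatrix_isSymm hB) (oppMatrix_mulVec_one hB)
    (by have := Nat.card_pos (α := F); positivity) hEKR.dotProduct_oppMatrix_mulVec hff (by
      rw [hf1, ← Nat.card_eq_fintype_card, ← hsharp, hpow]
      ring)) D
  rw [oppMatrix, relMatrix_mulVec_indicator_one] at h
  simp only [Pi.smul_apply, Pi.sub_apply, Pi.one_apply, Set.indicator_of_notMem hD, sub_zero,
    smul_eq_mul, mul_one] at h
  exact_mod_cast h

theorem mul_ncard_lt_of_sharp [FiniteDimensional F V] (hB : IsSymplectic B n) (hn : 0 < n)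
    (hq : n ^ 2 ≤ Nat.card F)
    (hsharp : (𝓕.ncard : ℝ) * ((Nat.card F : ℝ) ^ n + 1) = Nat.card (FullFlag B n)) :
    n * 𝓕.ncard < 𝓕.ncard + n * Nat.card F ^ ((n - 1) * n) := by
  have hle := natCard_fullFlag_mul_le hB.alt hB.nondeg hB.finrank_eq.ge
  rw [hB.finrank_eq, show 2 * n + 1 - n = n + 1 by omega] at hle
  have hcast : ((Nat.card F - 1 : ℕ) : ℝ) = Nat.card F - 1 := Nat.cast_pred Nat.card_pos
  have := mul_lt_add_mul_of_mul_pow_le (q := Nat.card F) (a := 𝓕.ncard) hn (mod_cast hq)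
    (Nat.cast_nonneg _) (by rw [hsharp, ← hcast]; exact_mod_cast hle)
  exact_mod_cast this

end SharpSets

theorem stmt_5_general {F V : Type} [Field F] [Finite F] [AddCommGroup V] [Module F V]
    {B : V →ₗ[F] V →ₗ[F] F} {n : ℕ} (hB : IsSymplectic B n) (hq : n ^ 2 ≤ Nat.card F)
    {𝓕 : Set (FullFlag B n)} (hEKR : IsEKRFlags 𝓕)
    (hsharp : (𝓕.ncard : ℝ) = Nat.card (FullFlag B n) / ((Nat.card F : ℝ) ^ n + 1))
    {C : FullFlag B n} (hC : C ∈ 𝓕) : ∃ s ∈ Finset.Icc 1 n, Heavy 𝓕 s (C.space s) := by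
  have hn : 0 < n := by
    by_contra! h
    exact hEKR C hC C hC fun i hi => by grind
  have : FiniteDimensional F V := .of_finrank_pos (by rw [hB.finrank_eq]; omega)
  have : Finite V := Module.finite_of_finite F
  rw [eq_div_iff (by positivity)] at hsharp
  refine exists_heavy_of_card_mul_ncard_lt hEKR
    (fun D hD => (ncard_flagOpp_of_sharp hB hn hEKR hsharp hD).ge) ?_ hC
  rw [Nat.card_Icc, Nat.add_sub_cancel]
  exact mul_ncard_lt_of_sharp hB hn hq hsharp

/-- For large `q`, a ratio-sharp EKR-set of chambers contains no light
chamber: every chamber in the set has a heavy `s`-space for some `s ∈ [n]`. -/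
theorem stmt_5 (n : ℕ) (hn : 3 ≤ n) :
    ∃ q₀ : ℕ, ∀ (F V : Type) [Field F] [Fintype F] [AddCommGroup V] [Module F V],
      ∀ q : ℕ, Fintype.card F = q → q₀ ≤ q →
      ∀ B : V →ₗ[F] V →ₗ[F] F, IsAltForm B → NondegForm B →
      FiniteDimensional F V → Module.finrank F V = 2 * n →
      ∀ 𝓕 : Set (SFlag B (Finset.Icc 1 n)),
        IsEKRFlags 𝓕 →
        (𝓕.ncard : ℝ) = (Nat.card (SFlag B (Finset.Icc 1 n)) : ℝ) / ((q : ℝ) ^ n + 1) →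
        ∀ C ∈ 𝓕, ∃ s ∈ Finset.Icc 1 n, Heavy 𝓕 s (SFlag.space C s) := by
  refine ⟨n ^ 2, fun F V _ _ _ _ q hq hqn B hA hN _ hdim 𝓕 hEKR hsharp C hC => ?_⟩
  subst hq
  rw [← Nat.card_eq_fintype_card] at hqn hsharp
  exact stmt_5_general ⟨hA, hN, hdim⟩ hqn hEKR hsharp hC
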